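/- arXiv:1812.08480 — 2 statements merged into one kernel-verified Lean document; each statement's English description precedes it below -/
import Mathlib

section
/- There is a constant C > 0 such that for every n ≥ 4 there exists a finitely supported probability distribution D over deterministic strategies for the HiddenPermutation problem with n positions such that for every secret (z,π) ∈ {0,1}^n × S_n, the expectation over g ∼ D of T(g,z,π) is at most C·n·log₂ log₂ n. -/
/-- The score `f_{z,π}(x)`: the length of the longest common prefix of `x` and `z`
in the order imposed by `π` (positions are 0-indexed, so `π j` for `(j : ℕ) < i`
corresponds to the 1-indexed positions `π(1),…,π(i)`). -/
def score (n : ℕ) (z : Fin n → Bool) (π : Equiv.Perm (Fin n)) (x : Fin n → Bool) : ℕ :=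
  Nat.findGreatest (fun i => ∀ j : Fin n, (j : ℕ) < i → z (π j) = x (π j)) n

/-- The list of scores produced in the first `k` queries when the deterministic
strategy `g` plays against the secret `(z, π)`. -/
def histScores (n : ℕ) (g : List ℕ → Fin n → Bool) (z : Fin n → Bool)
    (π : Equiv.Perm (Fin n)) : ℕ → List ℕ
  | 0 => []
  | k + 1 => histScores n g z π k ++ [score n z π (g (histScores n g z π k))]

/-- `(z, π)` is the unique secret consistent with the guessing history produced by the
deterministic strategy `g` against `(z, π)` in its first `T` queries. -/
def Identifies (n : ℕ) (g : List ℕ → Fin n → Bool) (z : Fin n → Bool)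
    (π : Equiv.Perm (Fin n)) (T : ℕ) : Prop :=
  ∀ (z' : Fin n → Bool) (π' : Equiv.Perm (Fin n)),
    (∀ k < T, score n z' π' (g (histScores n g z π k)) =
        score n z π (g (histScores n g z π k))) →
    z' = z ∧ π' = π


open scoped ENNReal

/-- `T(g,z,π)`: the least `T` such that `g` identifies `(z,π)` within `T` queries,
and `∞` if no such `T` exists. -/
noncomputable def timeToIdentify (n : ℕ) (g : List ℕ → Fin n → Bool) (z : Fin n → Bool)
    (π : Equiv.Perm (Fin n)) : ℕ∞ :=
  sInf {T : ℕ∞ | ∃ m : ℕ, T = (m : ℕ∞) ∧ Identifies n g z π m}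


/-! ### Decision trees -/

/-- Query programs (decision trees). -/
inductive QP (n : ℕ) (α : Type) : Type
  | ret : α → QP n α
  | ask : (Fin n → Bool) → (ℕ → QP n α) → QP n α

namespace QP

def bind {n : ℕ} {α β : Type} : QP n α → (α → QP n β) → QP n β
  | ret a, f => f a
  | ask x k, f => ask x (fun r => bind (k r) f)

def ev {n : ℕ} {α : Type} (O : (Fin n → Bool) → ℕ) : QP n α → α
  | ret a => a
  | ask x k => ev O (k (O x))

def cost {n : ℕ} {α : Type} (O : (Fin n → Bool) → ℕ) : QP n α → ℕ
  | ret _ => 0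
  | ask x k => cost O (k (O x)) + 1

def cap {n : ℕ} {α : Type} (c : ℕ) : QP n α → QP n α
  | ret a => ret a
  | ask x k => ask x (fun r => cap c (k (min r c)))

def walk {n : ℕ} {α : Type} : QP n α → List ℕ → QP n α
  | ret a, _ => ret a
  | ask x k, [] => ask x k
  | ask _ k, r :: h => walk (k r) h

def query {n : ℕ} {α : Type} : QP n α → Fin n → Bool
  | ret _ => fun _ => false
  | ask x _ => x

/-- the answers along the run -/
def hist {n : ℕ} {α : Type} (O : (Fin n → Bool) → ℕ) (p : QP n α) : ℕ → List ℕ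
  | 0 => []
  | k + 1 => hist O p k ++ [O (query (walk p (hist O p k)))]

@[simp] theorem ev_ret {n : ℕ} {α : Type} (O : (Fin n → Bool) → ℕ) (a : α) :
    ev O (ret a : QP n α) = a := rfl
@[simp] theorem cost_ret {n : ℕ} {α : Type} (O : (Fin n → Bool) → ℕ) (a : α) :
    cost O (ret a : QP n α) = 0 := rfl
@[simp] theorem ev_ask {n : ℕ} {α : Type} (O : (Fin n → Bool) → ℕ) (x : Fin n → Bool)
    (k : ℕ → QP n α) : ev O (ask x k) = ev O (k (O x)) := rfl
@[simp] theorem cost_ask {n : ℕ} {α : Type} (O : (Fin n → Bool) → ℕ) (x : Fin n → Bool)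
    (k : ℕ → QP n α) : cost O (ask x k) = cost O (k (O x)) + 1 := rfl

@[simp] theorem ev_bind {n : ℕ} {α β : Type} (O : (Fin n → Bool) → ℕ) (p : QP n α)
    (f : α → QP n β) : ev O (bind p f) = ev O (f (ev O p)) := by
  induction p with
  | ret a => rfl
  | ask x k ih => simpa [bind] using ih (O x)

@[simp] theorem cost_bind {n : ℕ} {α β : Type} (O : (Fin n → Bool) → ℕ) (p : QP n α)
    (f : α → QP n β) : cost O (bind p f) = cost O p + cost O (f (ev O p)) := by
  induction p with
  | ret a => simp [bind]
  | ask x k ih => simp only [bind, cost_ask, ev_ask, ih (O x)]; omega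

@[simp] theorem ev_cap {n : ℕ} {α : Type} (O : (Fin n → Bool) → ℕ) (c : ℕ) (p : QP n α) :
    ev O (cap c p) = ev (fun x => min (O x) c) p := by
  induction p with
  | ret a => rfl
  | ask x k ih => simpa [cap] using ih (min (O x) c)

@[simp] theorem cost_cap {n : ℕ} {α : Type} (O : (Fin n → Bool) → ℕ) (c : ℕ) (p : QP n α) :
    cost O (cap c p) = cost (fun x => min (O x) c) p := by
  induction p with
  | ret a => rfl
  | ask x k ih => simpa [cap] using ih (min (O x) c)

theorem hist_ask {n : ℕ} {α : Type} (O : (Fin n → Bool) → ℕ) (x : Fin n → Bool)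
    (f : ℕ → QP n α) (k : ℕ) : hist O (ask x f) (k + 1) = O x :: hist O (f (O x)) k := by
  induction k with
  | zero => simp [hist, walk, query]
  | succ k ih =>
    rw [hist, ih]
    simp [hist, walk]

theorem ev_eq_of_hist {n : ℕ} {α : Type} (O O' : (Fin n → Bool) → ℕ) (p : QP n α)
    (h : ∀ k < cost O p, O' (query (walk p (hist O p k))) = O (query (walk p (hist O p k)))) :
    ev O' p = ev O p := by
  induction p with
  | ret a => rfl
  | ask x f ih =>
    have h0 : O' x = O x := by simpa [hist, walk, query] using h 0 (by simp)
    rw [ev_ask, ev_ask, h0]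
    apply ih
    intro k hk
    have := h (k + 1) (by simpa using hk)
    simpa [hist_ask, walk] using this

end QP

/-! ### The score in relative coordinates -/

/-- The score, with the secret described by `w = z ∘ π` and `π`. -/
def sc {n : ℕ} (w : Fin n → Bool) (π : Equiv.Perm (Fin n)) (x : Fin n → Bool) : ℕ :=
  Nat.findGreatest (fun i => ∀ j : Fin n, (j : ℕ) < i → w j = x (π j)) n

theorem le_sc {n : ℕ} (w : Fin n → Bool) (π : Equiv.Perm (Fin n)) (x : Fin n → Bool) (i : ℕ)
    (hi : i ≤ n) : i ≤ sc w π x ↔ ∀ j : Fin n, (j : ℕ) < i → w j = x (π j) := by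
  constructor
  · intro h j hj
    have := @Nat.findGreatest_spec 0 (fun i => ∀ j : Fin n, (j : ℕ) < i → w j = x (π j)) _ n
      (Nat.zero_le _) (by intro j hj; omega)
    exact this j (lt_of_lt_of_le hj h)
  · intro h
    exact Nat.le_findGreatest hi h

theorem score_relabel {n : ℕ} (z : Fin n → Bool) (π σ : Equiv.Perm (Fin n)) (y : Fin n → Bool) :
    score n z π (fun i => y (σ i)) = sc (fun j => z (π j)) (π.trans σ) y := rfl

theorem hist_relabel {n : ℕ} {α : Type} (z : Fin n → Bool) (π σ : Equiv.Perm (Fin n))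
    (p : QP n α) (k : ℕ) :
    histScores n (fun h i => QP.query (QP.walk p h) (σ i)) z π k =
      QP.hist (sc (fun j => z (π j)) (π.trans σ)) p k := by
  induction k with
  | zero => rfl
  | succ k ih => rw [histScores, QP.hist, ih]; rfl

/-- A program whose result determines the secret gives a strategy. -/
theorem time_le {n : ℕ} {α : Type} (p : QP n α)
    (hp : ∀ w w' : Fin n → Bool, ∀ π π' : Equiv.Perm (Fin n),
      QP.ev (sc w π) p = QP.ev (sc w' π') p → w = w' ∧ π = π')
    (z : Fin n → Bool) (π σ : Equiv.Perm (Fin n)) :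
    timeToIdentify n (fun h i => QP.query (QP.walk p h) (σ i)) z π ≤
      (QP.cost (sc (fun j => z (π j)) (π.trans σ)) p : ℕ∞) := by
  apply sInf_le
  refine ⟨_, rfl, ?_⟩
  intro z' π' h
  have h1 := QP.ev_eq_of_hist (sc (fun j => z (π j)) (π.trans σ))
    (sc (fun j => z' (π' j)) (π'.trans σ)) p (by
      intro k hk
      have := h k hk
      rw [hist_relabel] at this
      exact this)
  obtain ⟨h2, h3⟩ := hp _ _ _ _ h1
  have h4 : π' = π := by
    ext i
    have := congrArg (fun e => σ.symm (e i)) h3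
    simpa using congrArg Fin.val this
  subst h4
  refine ⟨?_, rfl⟩
  funext i
  simpa using congrFun h2 (π'.symm i)

/-! ### Basic operations -/

/-- flip `x` on `F` -/
def flipOn {n : ℕ} (x : Fin n → Bool) (F : Finset (Fin n)) : Fin n → Bool :=
  fun p => xor (x p) (decide (p ∈ F))

theorem eq_flipOn {n : ℕ} (b : Bool) (x : Fin n → Bool) (F : Finset (Fin n)) (p : Fin n)
    (h : b = x p) : b = flipOn x F p ↔ p ∉ F := by
  subst h; unfold flipOn; by_cases hp : p ∈ F <;> simp [hp]

/-- Current knowledge about the first `s` items is correct. -/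
structure Core {n : ℕ} (s : ℕ) (x : Fin n → Bool) (V : Fin n → Finset (Fin n))
    (w : Fin n → Bool) (π : Equiv.Perm (Fin n)) : Prop where
  agree : ∀ j : Fin n, (j : ℕ) < s → w j = x (π j)
  mem : ∀ j : Fin n, (j : ℕ) < s → π j ∈ V j
  disj : ∀ j k : Fin n, (j : ℕ) < s → (k : ℕ) < s → j ≠ k → Disjoint (V j) (V k)

/-- capped score -/
def csc {n : ℕ} (w : Fin n → Bool) (π : Equiv.Perm (Fin n)) (C : ℕ) (x : Fin n → Bool) : ℕ :=
  min (sc w π x) C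

theorem refine_loop {n : ℕ} (s : ℕ) (hs : s ≤ n) (x : Fin n → Bool) (V : Fin n → Finset (Fin n))
    (χ : Fin n → Fin n → ℕ) (b : ℕ) :
    ∀ (fuel c : ℕ) (G : Finset (Fin n)) (col : Fin n → ℕ),
      ∃ p : QP n (Fin n → ℕ), ∀ w π C, s ≤ C → Core s x V w π → (∀ j ∈ G, (j : ℕ) < s) →
        (∀ j ∈ G, c ≤ χ j (π j) ∧ χ j (π j) < b) → (b - c) + G.card ≤ fuel →
        QP.cost (csc w π C) p ≤ fuel ∧
        ∀ j, QP.ev (csc w π C) p j = if j ∈ G then χ j (π j) else col j := by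
  classical
  intro fuel
  induction fuel with
  | zero =>
    intro c G col
    refine ⟨.ret col, ?_⟩
    intro w π C hC hcore hG hχ hf
    have : G = ∅ := by
      rw [← Finset.card_eq_zero]; omega
    subst this
    simp
  | succ fuel ih =>
    intro c G col
    choose pf hpf using ih
    let F := G.biUnion fun j => (V j).filter (fun p => χ j p = c)
    refine ⟨.ask (flipOn x F) (fun r => if h : ∃ j ∈ G, (j : ℕ) = r then
      pf c (G.erase h.choose) (Function.update col h.choose c) else pf (c + 1) G col), ?_⟩
    intro w π C hC hcore hG hχ hf
    have hF : ∀ j : Fin n, (j : ℕ) < s → (π j ∈ F ↔ j ∈ G ∧ χ j (π j) = c) := by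
      intro j hj
      simp only [F, Finset.mem_biUnion, Finset.mem_filter]
      constructor
      · rintro ⟨i, hi, hmem, hc⟩
        by_cases hij : i = j
        · subst hij; exact ⟨hi, hc⟩
        · exact absurd (hcore.mem j hj)
            (Finset.disjoint_left.mp (hcore.disj i j (hG i hi) hj hij) hmem)
      · rintro ⟨hj', hc⟩
        exact ⟨j, hj', hcore.mem j hj, hc⟩
    have hw : ∀ j : Fin n, (j : ℕ) < s → (w j = flipOn x F (π j) ↔ π j ∉ F) := fun j hj =>
      eq_flipOn _ _ _ _ (hcore.agree j hj)
    have hfirst : ∀ i : Fin n, (i : ℕ) < s → sc w π (flipOn x F) = i → π i ∈ F := by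
      intro i hi he
      by_contra hcon
      have h1 := (le_sc w π (flipOn x F) i (by omega)).mp (by omega)
      have h2 := (le_sc w π (flipOn x F) (i + 1) (by omega)).mpr (by
        intro j hj
        by_cases hji : j = i
        · subst hji; exact (hw j hi).mpr hcon
        · apply h1; have : (j : ℕ) ≠ i := fun h => hji (Fin.ext h)
          omega)
      omega
    simp only [QP.cost_ask, QP.ev_ask]
    split_ifs with h
    · obtain ⟨hiG, hir⟩ := h.choose_spec
      set i := h.choose with hi
      have his := hG i hiG
      have hsc : sc w π (flipOn x F) = i := by
        unfold csc at hir; omega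
      have hc := ((hF i his).mp (hfirst i his hsc)).2
      have hcard : (G.erase i).card + 1 = G.card := Finset.card_erase_add_one hiG
      obtain ⟨h1, h2⟩ := hpf c (G.erase i) (Function.update col i c) w π C hC hcore
        (fun j hj => hG j (Finset.mem_of_mem_erase hj))
        (fun j hj => hχ j (Finset.mem_of_mem_erase hj)) (by omega)
      refine ⟨by omega, ?_⟩
      intro j
      rw [h2 j]
      by_cases hji : j = i
      · rw [hji]; simp [hiG, hc]
      · simp [hji]
    · have hne : ∀ j ∈ G, χ j (π j) ≠ c := by
        intro j hj hc
        have hjF := (hF j (hG j hj)).mpr ⟨hj, hc⟩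
        have hjs := hG j hj
        have hlt : sc w π (flipOn x F) ≤ j := by
          by_contra hcon
          have := (le_sc w π (flipOn x F) (j + 1) (by omega)).mp (by omega) j (by omega)
          exact (hw j hjs).mp this hjF
        let i : Fin n := ⟨sc w π (flipOn x F), by omega⟩
        have hi := hfirst i (by simp only [i]; omega) rfl
        have hi2 := ((hF i (by simp only [i]; omega)).mp hi).1
        exact h ⟨i, hi2, by simp only [i, csc]; omega⟩
      by_cases hcb : c < b
      · obtain ⟨h1, h2⟩ := hpf (c + 1) G col w π C hC hcore hG
          (fun j hj => ⟨by have := (hχ j hj).1; have := hne j hj; omega, (hχ j hj).2⟩) (by omega)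
        exact ⟨by omega, h2⟩
      · have hGe : G = ∅ := by
          apply Finset.eq_empty_of_forall_notMem
          intro j hj
          have := hχ j hj; omega
        obtain ⟨h1, h2⟩ := hpf (c + 1) G col w π C hC hcore hG
          (by intro j hj; simp [hGe] at hj) (by simp [hGe]; omega)
        exact ⟨by omega, h2⟩

/-- Every finite set of size at most `2^m` can be split into `2^a` parts of size at most
`2^(m-a)`. -/
theorem exists_split {n : ℕ} (S : Finset (Fin n)) (m a : ℕ) (ha : a ≤ m) (hS : S.card ≤ 2 ^ m) :
    ∃ χ : Fin n → ℕ, (∀ p ∈ S, χ p < 2 ^ a) ∧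
      ∀ c, (S.filter (fun p => χ p = c)).card ≤ 2 ^ (m - a) := by
  classical
  let e := S.equivFin
  refine ⟨fun p => if h : p ∈ S then (e ⟨p, h⟩ : ℕ) / 2 ^ (m - a) else 0, ?_, ?_⟩
  · intro p hp
    simp only [hp, dif_pos]
    rw [Nat.div_lt_iff_lt_mul (by positivity), ← pow_add]
    have := (e ⟨p, hp⟩).2
    rw [Nat.add_sub_cancel' ha]
    omega
  · intro c
    have : (Finset.Ico (c * 2 ^ (m - a)) (c * 2 ^ (m - a) + 2 ^ (m - a))).card = 2 ^ (m - a) := by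
      simp
    rw [← this]
    apply Finset.card_le_card_of_injOn (fun p => if h : p ∈ S then (e ⟨p, h⟩ : ℕ) else 0)
    · intro p hp
      have hp' : p ∈ S ∧ (if h : p ∈ S then (e ⟨p, h⟩ : ℕ) / 2 ^ (m - a) else 0) = c := by
        simpa using hp
      obtain ⟨h1, h2⟩ := hp'
      simp only [h1, dif_pos] at h2 ⊢
      have h3 := (Nat.div_eq_iff (by positivity)).mp h2
      have h4 : 0 < 2 ^ (m - a) := by positivity
      simp only [Finset.coe_Ico, Set.mem_Ico]
      omega
    · intro p hp q hq hpq
      have h1 : p ∈ S := by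
        have := Finset.mem_coe.mp hp
        exact (Finset.mem_filter.mp this).1
      have h2 : q ∈ S := by
        have := Finset.mem_coe.mp hq
        exact (Finset.mem_filter.mp this).1
      simp only [h1, h2, dif_pos] at hpq
      have := e.injective (Fin.ext hpq)
      simpa using this

theorem refine_prog {n : ℕ} (s : ℕ) (hs : s ≤ n) (x : Fin n → Bool) (V : Fin n → Finset (Fin n))
    (G : Finset (Fin n)) (hG : ∀ j ∈ G, (j : ℕ) < s) (m a : ℕ) (ha : a ≤ m)
    (hV : ∀ j ∈ G, (V j).card ≤ 2 ^ m) :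
    ∃ p : QP n (Fin n → Finset (Fin n)), ∀ w π C, s ≤ C → Core s x V w π →
      ∃ V', QP.ev (csc w π C) p = V' ∧ Core s x V' w π ∧ (∀ j, j ∉ G → V' j = V j) ∧
        (∀ j ∈ G, (V' j).card ≤ 2 ^ (m - a)) ∧
        QP.cost (csc w π C) p ≤ 2 ^ a + G.card := by
  classical
  have : ∀ j, ∃ χ : Fin n → ℕ, j ∈ G → ((∀ p ∈ V j, χ p < 2 ^ a) ∧
      ∀ c, ((V j).filter (fun p => χ p = c)).card ≤ 2 ^ (m - a)) := by
    intro j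
    by_cases hj : j ∈ G
    · obtain ⟨χ, h⟩ := exists_split (V j) m a ha (hV j hj)
      exact ⟨χ, fun _ => h⟩
    · exact ⟨fun _ => 0, fun h => absurd h hj⟩
  choose χ hχ using this
  obtain ⟨p, hp⟩ := refine_loop s hs x V χ (2 ^ a) (2 ^ a + G.card) 0 G (fun _ => 0)
  refine ⟨p.bind (fun col => .ret (fun j => if j ∈ G then (V j).filter (fun q => χ j q = col j)
    else V j)), ?_⟩
  intro w π C hC hcore
  obtain ⟨h1, h2⟩ := hp w π C hC hcore hG
    (fun j hj => ⟨Nat.zero_le _, (hχ j hj).1 _ (hcore.mem j (hG j hj))⟩) (by simp)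
  refine ⟨_, rfl, ⟨hcore.agree, ?_, ?_⟩, ?_, ?_, ?_⟩
  · intro j hj
    simp only [QP.ev_bind, QP.ev_ret, h2]
    split_ifs with hjG
    · simp [hcore.mem j hj]
    · exact hcore.mem j hj
  · intro j k hj hk hjk
    have hsub : ∀ j, (QP.ev (csc w π C) (p.bind (fun col => .ret (fun j => if j ∈ G then
        (V j).filter (fun q => χ j q = col j) else V j)))) j ⊆ V j := by
      intro j
      simp only [QP.ev_bind, QP.ev_ret]
      split_ifs
      · exact Finset.filter_subset _ _
      · exact Finset.Subset.refl _
    exact (hcore.disj j k hj hk hjk).mono (hsub j) (hsub k)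
  · intro j hj
    simp [hj]
  · intro j hj
    simp only [QP.ev_bind, QP.ev_ret, hj, if_true]
    exact (hχ j hj).2 _
  · simpa using h1

theorem multi_refine {n : ℕ} (s : ℕ) (hs : s ≤ n) (x : Fin n → Bool)
    (G : Finset (Fin n)) (hG : ∀ j ∈ G, (j : ℕ) < s) :
    ∀ (k m : ℕ), k ≤ m → ∀ (V : Fin n → Finset (Fin n)),
    (∀ j ∈ G, (V j).card ≤ 2 ^ m) →
    ∃ p : QP n (Fin n → Finset (Fin n)), ∀ w π C, s ≤ C → Core s x V w π →
      ∃ V', QP.ev (csc w π C) p = V' ∧ Core s x V' w π ∧ (∀ j, j ∉ G → V' j = V j) ∧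
        (∀ j ∈ G, (V' j).card ≤ 2 ^ (m - k)) ∧
        QP.cost (csc w π C) p ≤ k * (2 + G.card) := by
  classical
  intro k
  induction k with
  | zero =>
    intro m hm V hV
    refine ⟨.ret V, fun w π C hC hcore => ⟨V, rfl, hcore, fun _ _ => rfl, hV, by simp⟩⟩
  | succ k ih =>
    intro m hm V hV
    obtain ⟨p, hp⟩ := refine_prog s hs x V G hG m 1 (by omega) hV
    have : ∀ V' : Fin n → Finset (Fin n), ∃ q : QP n (Fin n → Finset (Fin n)),
        (∀ j ∈ G, (V' j).card ≤ 2 ^ (m - 1)) → ∀ w π C, s ≤ C → Core s x V' w π →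
      ∃ V'', QP.ev (csc w π C) q = V'' ∧ Core s x V'' w π ∧ (∀ j, j ∉ G → V'' j = V' j) ∧
        (∀ j ∈ G, (V'' j).card ≤ 2 ^ (m - 1 - k)) ∧
        QP.cost (csc w π C) q ≤ k * (2 + G.card) := by
      intro V'
      by_cases h : ∀ j ∈ G, (V' j).card ≤ 2 ^ (m - 1)
      · obtain ⟨q, hq⟩ := ih (m - 1) (by omega) V' h
        exact ⟨q, fun _ => hq⟩
      · exact ⟨.ret V', fun h' => absurd h' h⟩
    choose q hq using this
    refine ⟨p.bind q, ?_⟩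
    intro w π C hC hcore
    obtain ⟨V', e1, hc1, hoff1, hon1, hcost1⟩ := hp w π C hC hcore
    obtain ⟨V'', e2, hc2, hoff2, hon2, hcost2⟩ := hq V' hon1 w π C hC hc1
    refine ⟨V'', by simp [e1, e2], hc2, fun j hj => by rw [hoff2 j hj, hoff1 j hj], ?_, ?_⟩
    · intro j hj
      have := hon2 j hj
      rwa [Nat.sub_sub, Nat.add_comm 1 k] at this
    · simp only [QP.cost_bind, e1]
      have : (k + 1) * (2 + G.card) = k * (2 + G.card) + (2 + G.card) := by ring
      omega

/-- Candidates not used by the first `s` items. -/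
def rest {n : ℕ} (s : ℕ) (V : Fin n → Finset (Fin n)) : Finset (Fin n) :=
  Finset.univ.filter (fun p => ∀ j : Fin n, (j : ℕ) < s → p ∉ V j)

theorem test_prog {n : ℕ} (i : Fin n) (x : Fin n → Bool) (V : Fin n → Finset (Fin n)) :
    ∃ p : QP n (Option (Fin n → Bool)), ∀ w π, Core i x V w π →
      QP.cost (csc w π (i + 1)) p = 2 ∧
      (QP.ev (csc w π (i + 1)) p = none → π i ∉ rest i V) ∧
      (∀ x', QP.ev (csc w π (i + 1)) p = some x' → π i ∈ rest i V ∧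
        ∀ j : Fin n, (j : ℕ) < i + 1 → w j = x' (π j)) := by
  classical
  refine ⟨.ask x (fun r1 => .ask (flipOn x (rest i V)) (fun r2 => .ret
    (if r1 = r2 then none else if r1 = i + 1 then some x else some (flipOn x (rest i V))))), ?_⟩
  intro w π hcore
  have hnr : ∀ j : Fin n, (j : ℕ) < i → π j ∉ rest i V := by
    intro j hj h
    exact (Finset.mem_filter.mp h).2 j hj (hcore.mem j hj)
  have hfl : ∀ j : Fin n, (j : ℕ) < i → w j = flipOn x (rest i V) (π j) := fun j hj =>
    (eq_flipOn _ _ _ _ (hcore.agree j hj)).mpr (hnr j hj)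
  have key : ∀ y : Fin n → Bool, (∀ j : Fin n, (j : ℕ) < i → w j = y (π j)) →
      ((csc w π (i + 1) y = i + 1 ∧ w i = y (π i)) ∨ (csc w π (i + 1) y = i ∧ w i ≠ y (π i))) := by
    intro y hy
    have h1 := (le_sc w π y i i.2.le).mpr hy
    by_cases h : w i = y (π i)
    · left
      have h2 := (le_sc w π y (i + 1) i.2).mpr (by
        intro j hj
        by_cases hji : j = i
        · rw [hji]; exact h
        · apply hy; have : (j : ℕ) ≠ i := fun h => hji (Fin.ext h)
          omega)
      exact ⟨by unfold csc; omega, h⟩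
    · right
      have h2 : ¬ ((i : ℕ) + 1 ≤ sc w π y) := by
        intro h3
        exact h ((le_sc w π y (i + 1) i.2).mp h3 i (by omega))
      exact ⟨by unfold csc; omega, h⟩
  have hx := key x hcore.agree
  have hy := key _ hfl
  have hext : ∀ y : Fin n → Bool, (∀ j : Fin n, (j : ℕ) < i → w j = y (π j)) → w i = y (π i) →
      ∀ j : Fin n, (j : ℕ) < i + 1 → w j = y (π j) := by
    intro y h1 h2 j hj
    by_cases hji : j = i
    · rw [hji]; exact h2
    · apply h1; have : (j : ℕ) ≠ i := fun h => hji (Fin.ext h)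
      omega
  have hfv : flipOn x (rest i V) (π i) = xor (x (π i)) (decide (π i ∈ rest i V)) := rfl
  refine ⟨rfl, ?_, ?_⟩
  · intro h hmem
    simp only [QP.ev_ask, QP.ev_ret] at h
    simp only [hfv, hmem, decide_true] at hy
    rcases hx with ⟨hx1, hx2⟩ | ⟨hx1, hx2⟩ <;> rcases hy with ⟨hy1, hy2⟩ | ⟨hy1, hy2⟩ <;>
      simp [hx1, hy1] at h
    · rw [← hx2] at hy2; simp at hy2
    · revert hx2 hy2; cases w i <;> cases x (π i) <;> simp
  · intro x' h
    simp only [QP.ev_ask, QP.ev_ret] at h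
    have hr : π i ∈ rest i V := by
      by_contra hmem
      simp only [hfv, hmem, decide_false, Bool.xor_false] at hy
      have : csc w π (i + 1) x = csc w π (i + 1) (flipOn x (rest i V)) := by
        rcases hx with ⟨hx1, hx2⟩ | ⟨hx1, hx2⟩ <;> rcases hy with ⟨hy1, hy2⟩ | ⟨hy1, hy2⟩
        · omega
        · exact absurd hx2 hy2
        · exact absurd hy2 hx2
        · omega
      simp [this] at h
    refine ⟨hr, ?_⟩
    split_ifs at h with h1 h2
    · injection h with h; subst h
      exact hext _ hcore.agree (by rcases hx with hx | hx; exact hx.2; omega)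
    · injection h with h; subst h
      exact hext _ hfl (by rcases hy with hy | hy; exact hy.2; omega)

/-! ### The algorithm -/

/-- State of the algorithm. -/
structure St (n : ℕ) where
  x : Fin n → Bool
  V : Fin n → Finset (Fin n)
  lvl : Fin n → ℕ

/-- Items of level `e` among the first `s` items. -/
def grp {n : ℕ} (s : ℕ) (σ : St n) (e : ℕ) : Finset (Fin n) :=
  Finset.univ.filter (fun j => (j : ℕ) < s ∧ σ.lvl j = e)

theorem mem_grp {n : ℕ} (s : ℕ) (σ : St n) (e : ℕ) (j : Fin n) :
    j ∈ grp s σ e ↔ (j : ℕ) < s ∧ σ.lvl j = e := by simp [grp]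

/-- Sum of levels. -/
def Lam {n : ℕ} (s : ℕ) (σ : St n) : ℕ :=
  ∑ j ∈ Finset.univ.filter (fun j : Fin n => (j : ℕ) < s), σ.lvl j

structure SInv {n : ℕ} (M : ℕ → ℕ) (t s : ℕ) (σ : St n) (w : Fin n → Bool)
    (π : Equiv.Perm (Fin n)) : Prop where
  core : Core s σ.x σ.V w π
  lvl_le : ∀ j : Fin n, (j : ℕ) < s → σ.lvl j ≤ t
  card_le : ∀ j : Fin n, (j : ℕ) < s → (σ.V j).card ≤ 2 ^ M (σ.lvl j)

theorem finalize_prog {n : ℕ} (M : ℕ → ℕ) (t : ℕ) (hMt : M t = 0) (s : ℕ) (hs : s ≤ n)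
    (σ : St n) (e : ℕ) :
    ∃ p : QP n (St n), ∀ w π C, s ≤ C → SInv M t s σ w π →
      ∃ σ', QP.ev (csc w π C) p = σ' ∧ SInv M t s σ' w π ∧ σ'.x = σ.x ∧
        (∀ j, j ∈ grp s σ e → σ'.lvl j = t) ∧ (∀ j, j ∉ grp s σ e → σ'.lvl j = σ.lvl j) ∧
        (∀ j, j ∉ grp s σ e → σ'.V j = σ.V j) ∧
        QP.cost (csc w π C) p ≤ M e * (2 + (grp s σ e).card) := by
  classical
  by_cases h : ∀ j ∈ grp s σ e, (σ.V j).card ≤ 2 ^ M e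
  · obtain ⟨p, hp⟩ := multi_refine s hs σ.x (grp s σ e) (fun j hj => ((mem_grp _ _ _ _).mp hj).1)
      (M e) (M e) le_rfl σ.V h
    refine ⟨p.bind (fun V' => .ret ⟨σ.x, V', fun j => if j ∈ grp s σ e then t else σ.lvl j⟩), ?_⟩
    intro w π C hC hI
    obtain ⟨V', e1, hc, hoff, hon, hcost⟩ := hp w π C hC hI.core
    refine ⟨⟨σ.x, V', fun j => if j ∈ grp s σ e then t else σ.lvl j⟩, by simp [e1],
      ⟨hc, ?_, ?_⟩, rfl, ?_, ?_, ?_, ?_⟩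
    · intro j hj
      dsimp only
      split_ifs
      · exact le_rfl
      · exact hI.lvl_le j hj
    · intro j hj
      dsimp only
      split_ifs with hg
      · rw [hMt]; simpa using hon j hg
      · rw [hoff j hg]; exact hI.card_le j hj
    · intro j hj; simp [hj]
    · intro j hj; simp [hj]
    · intro j hj; exact hoff j hj
    · simpa using hcost
  · refine ⟨.ret σ, ?_⟩
    intro w π C hC hI
    exfalso
    apply h
    intro j hj
    obtain ⟨h1, h2⟩ := (mem_grp _ _ _ _).mp hj
    have := hI.card_le j h1
    rwa [h2] at this

/-- cost of one failed attempt at level `e` -/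
def cc (M X : ℕ → ℕ) (e : ℕ) : ℕ := M e * (2 + X e) + 2

/-- `p` is in the candidate set of an item of level `f`. -/
def Coll {n : ℕ} (s : ℕ) (σ : St n) (f : ℕ) (p : Fin n) : Prop :=
  ∃ j : Fin n, (j : ℕ) < s ∧ σ.lvl j = f ∧ p ∈ σ.V j

theorem add_ok {n : ℕ} (M : ℕ → ℕ) (t : ℕ) (i : Fin n) (σ : St n) (x' : Fin n → Bool)
    (w : Fin n → Bool) (π : Equiv.Perm (Fin n)) (hI : SInv M t i σ w π)
    (h1 : π i ∈ rest i σ.V) (h2 : ∀ j : Fin n, (j : ℕ) < i + 1 → w j = x' (π j)) :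
    SInv M t i ⟨x', Function.update σ.V i (rest i σ.V), σ.lvl⟩ w π ∧
    Core (i + 1) x' (Function.update σ.V i (rest i σ.V)) w π := by
  classical
  have hne : ∀ j : Fin n, (j : ℕ) < i → j ≠ i := fun j hj h => by subst h; omega
  have hup : ∀ j : Fin n, (j : ℕ) < i → Function.update σ.V i (rest i σ.V) j = σ.V j :=
    fun j hj => Function.update_of_ne (hne j hj) _ _
  have hcases : ∀ j : Fin n, (j : ℕ) < i + 1 → (j : ℕ) < i ∨ j = i := by
    intro j hj
    by_cases h : (j : ℕ) < i
    · exact Or.inl h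
    · exact Or.inr (Fin.ext (by omega))
  have hdr : ∀ j : Fin n, (j : ℕ) < i → Disjoint (σ.V j) (rest i σ.V) := by
    intro j hj
    rw [Finset.disjoint_left]
    intro p hp hr
    exact (Finset.mem_filter.mp hr).2 j hj hp
  refine ⟨⟨⟨fun j hj => h2 j (by omega), ?_, ?_⟩, hI.lvl_le, ?_⟩, ⟨h2, ?_, ?_⟩⟩
  · intro j hj
    simp only [hup j hj]; exact hI.core.mem j hj
  · intro j k hj hk hjk
    simp only [hup j hj, hup k hk]; exact hI.core.disj j k hj hk hjk
  · intro j hj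
    simp only [hup j hj]; exact hI.card_le j hj
  · intro j hj
    rcases hcases j hj with h | h
    · rw [hup j h]; exact hI.core.mem j h
    · subst h; simpa using h1
  · intro j k hj hk hjk
    rcases hcases j hj with h | h <;> rcases hcases k hk with h' | h'
    · rw [hup j h, hup k h']; exact hI.core.disj j k h h' hjk
    · subst h'; rw [hup j h]; simpa using hdr j h
    · subst h; rw [hup k h']; simpa using (hdr k h').symm
    · exact absurd (h.trans h'.symm) hjk

theorem add_fail {n : ℕ} (M : ℕ → ℕ) (t : ℕ) (hMt : M t = 0) (i : Fin n) (σ : St n)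
    (w : Fin n → Bool) (π : Equiv.Perm (Fin n)) (hI : SInv M t i σ w π)
    (h1 : π i ∉ rest i σ.V) : ∃ j : Fin n, (j : ℕ) < i ∧ σ.lvl j < t ∧ π i ∈ σ.V j := by
  simp only [rest, Finset.mem_filter, Finset.mem_univ, true_and, not_forall, not_not] at h1
  obtain ⟨j, hj, hm⟩ := h1
  refine ⟨j, hj, ?_, hm⟩
  refine lt_of_le_of_ne (hI.lvl_le j hj) ?_
  intro h
  have hc := hI.card_le j hj
  rw [h, hMt, pow_zero] at hc
  have := Finset.card_le_one.mp hc _ hm _ (hI.core.mem j hj)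
  have := π.injective this
  subst this
  omega

open Classical in
theorem tryAdd_prog {n : ℕ} (M X : ℕ → ℕ) (t : ℕ) (hMt : M t = 0) (i : Fin n) :
    ∀ (k e : ℕ), e + k = t → ∀ σ : St n,
    ∃ p : QP n (St n), ∀ w π, SInv M t i σ w π →
      (∀ j : Fin n, (j : ℕ) < i → e ≤ σ.lvl j) →
      (∀ f, e ≤ f → f < t → (grp i σ f).card ≤ X f) →
      ∃ σ', QP.ev (csc w π (i + 1)) p = σ' ∧ SInv M t i σ' w π ∧ Core (i + 1) σ'.x σ'.V w π ∧
        (∀ j : Fin n, (j : ℕ) < i → σ.lvl j ≤ σ'.lvl j) ∧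
        QP.cost (csc w π (i + 1)) p ≤ 2 + ∑ f ∈ Finset.Ico e t,
          if Coll i σ f (π i) then ∑ g ∈ Finset.Ico e (f + 1), cc M X g else 0 := by
  intro k
  induction k with
  | zero =>
    intro e he σ
    obtain ⟨p, hp⟩ := test_prog i σ.x σ.V
    refine ⟨p.bind (fun r => match r with
      | some x' => .ret ⟨x', Function.update σ.V i (rest i σ.V), σ.lvl⟩
      | none => .ret σ), ?_⟩
    intro w π hI hl _
    obtain ⟨h1, h2, h3⟩ := hp w π hI.core
    cases hr : QP.ev (csc w π (i + 1)) p with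
    | some x' =>
      obtain ⟨h4, h5⟩ := h3 x' hr
      obtain ⟨h6, h7⟩ := add_ok M t i σ x' w π hI h4 h5
      refine ⟨⟨x', Function.update σ.V i (rest i σ.V), σ.lvl⟩, by simp [hr], h6, h7,
        fun _ _ => le_rfl, ?_⟩
      simp [hr, h1]
    | none =>
      obtain ⟨j, hj, hlt, _⟩ := add_fail M t hMt i σ w π hI (h2 hr)
      have := hl j hj
      omega
  | succ k ih =>
    intro e he σ
    obtain ⟨p, hp⟩ := test_prog i σ.x σ.V
    obtain ⟨q, hq⟩ := finalize_prog M t hMt i i.2.le σ e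
    choose q2 hq2 using ih (e + 1) (by omega)
    refine ⟨p.bind (fun r => match r with
      | some x' => .ret ⟨x', Function.update σ.V i (rest i σ.V), σ.lvl⟩
      | none => q.bind q2), ?_⟩
    intro w π hI hl hX
    obtain ⟨h1, h2, h3⟩ := hp w π hI.core
    cases hr : QP.ev (csc w π (i + 1)) p with
    | some x' =>
      obtain ⟨h4, h5⟩ := h3 x' hr
      obtain ⟨h6, h7⟩ := add_ok M t i σ x' w π hI h4 h5
      refine ⟨⟨x', Function.update σ.V i (rest i σ.V), σ.lvl⟩, by simp [hr], h6, h7,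
        fun _ _ => le_rfl, ?_⟩
      simp [hr, h1]
    | none =>
      obtain ⟨j, hj, hlt, hm⟩ := add_fail M t hMt i σ w π hI (h2 hr)
      obtain ⟨σ1, e1, hI1, hx1, hon1, hoff1, hV1, hcost1⟩ := hq w π (i + 1) (by omega) hI
      have hmono1 : ∀ j : Fin n, (j : ℕ) < i → σ.lvl j ≤ σ1.lvl j := by
        intro j hj
        by_cases hg : j ∈ grp i σ e
        · rw [hon1 j hg]; exact hI.lvl_le j hj
        · rw [hoff1 j hg]
      have hgrp : ∀ f, e + 1 ≤ f → f < t → ∀ j : Fin n, (j : ℕ) < i →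
          (σ1.lvl j = f ↔ σ.lvl j = f) ∧ (σ1.lvl j = f → σ1.V j = σ.V j) := by
        intro f hf hft j hj
        by_cases hg : j ∈ grp i σ e
        · have h8 := hon1 j hg
          have h9 := ((mem_grp _ _ _ _).mp hg).2
          constructor
          · constructor <;> intro <;> omega
          · intro; omega
        · rw [hoff1 j hg]
          exact ⟨Iff.rfl, fun _ => hV1 j hg⟩
      obtain ⟨σ2, e2, hI2, hC2, hmono2, hcost2⟩ := hq2 σ1 w π hI1 (by
          intro j hj
          by_cases hg : j ∈ grp i σ e
          · rw [hon1 j hg]; omega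
          · rw [hoff1 j hg]
            have := hl j hj
            have h9 : σ.lvl j ≠ e := fun h => hg ((mem_grp _ _ _ _).mpr ⟨hj, h⟩)
            omega) (by
          intro f hf hft
          have : grp i σ1 f = grp i σ f := by
            ext j
            rw [mem_grp, mem_grp]
            constructor
            · rintro ⟨h8, h9⟩; exact ⟨h8, ((hgrp f hf hft j h8).1).mp h9⟩
            · rintro ⟨h8, h9⟩; exact ⟨h8, ((hgrp f hf hft j h8).1).mpr h9⟩
          rw [this]
          exact hX f (by omega) hft)
      refine ⟨σ2, by simp [hr, e1, e2], hI2, hC2,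
        fun j hj => (hmono1 j hj).trans (hmono2 j hj), ?_⟩
      simp only [QP.cost_bind, hr, h1, e1]
      have hcoll : ∀ f ∈ Finset.Ico (e + 1) t, (Coll i σ1 f (π i) ↔ Coll i σ f (π i)) := by
        intro f hf
        obtain ⟨hf1, hf2⟩ := Finset.mem_Ico.mp hf
        constructor
        · rintro ⟨j, h8, h9, h10⟩
          have := hgrp f hf1 hf2 j h8
          exact ⟨j, h8, this.1.mp h9, by rw [← this.2 h9]; exact h10⟩
        · rintro ⟨j, h8, h9, h10⟩
          have := hgrp f hf1 hf2 j h8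
          exact ⟨j, h8, this.1.mpr h9, by rw [this.2 (this.1.mpr h9)]; exact h10⟩
      have hcc : M e * (2 + (grp i σ e).card) + 2 ≤ cc M X e := by
        unfold cc
        have := hX e le_rfl (by omega)
        gcongr
      have hsum : cc M X e + ∑ f ∈ Finset.Ico (e + 1) t,
          (if Coll i σ1 f (π i) then ∑ g ∈ Finset.Ico (e + 1) (f + 1), cc M X g else 0) ≤
          ∑ f ∈ Finset.Ico e t,
          if Coll i σ f (π i) then ∑ g ∈ Finset.Ico e (f + 1), cc M X g else 0 := by
        have h8 : ∑ f ∈ Finset.Ico (e + 1) t,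
          (if Coll i σ1 f (π i) then ∑ g ∈ Finset.Ico (e + 1) (f + 1), cc M X g else 0) =
          ∑ f ∈ Finset.Ico (e + 1) t,
          (if Coll i σ f (π i) then ∑ g ∈ Finset.Ico (e + 1) (f + 1), cc M X g else 0) := by
          apply Finset.sum_congr rfl
          intro f hf
          simp only [hcoll f hf]
        have h9 : ∑ f ∈ Finset.Ico (e + 1) t,
          (if Coll i σ f (π i) then ∑ g ∈ Finset.Ico (e + 1) (f + 1), cc M X g else 0) ≤
          ∑ f ∈ Finset.Ico e t,
          (if Coll i σ f (π i) then ∑ g ∈ Finset.Ico (e + 1) (f + 1), cc M X g else 0) := by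
          apply Finset.sum_le_sum_of_subset
          exact Finset.Ico_subset_Ico (by omega) le_rfl
        have h10 : cc M X e ≤ ∑ f ∈ Finset.Ico e t, (if Coll i σ f (π i) then cc M X e else 0) := by
          have hfm : σ.lvl j ∈ Finset.Ico e t := Finset.mem_Ico.mpr ⟨hl j hj, hlt⟩
          have h11 := Finset.single_le_sum (f := fun f => if Coll i σ f (π i) then cc M X e else 0)
            (fun _ _ => Nat.zero_le _) hfm
          simpa [show Coll i σ (σ.lvl j) (π i) from ⟨j, hj, rfl, hm⟩] using h11
        rw [h8]
        refine (Nat.add_le_add h10 h9).trans ?_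
        rw [← Finset.sum_add_distrib]
        apply Finset.sum_le_sum
        intro f hf
        split_ifs
        · rw [← Finset.sum_eq_sum_Ico_succ_bot (by have := (Finset.mem_Ico.mp hf).1; omega)]
        · exact le_rfl
      omega

theorem cascade_prog {n : ℕ} (M a : ℕ → ℕ) (t : ℕ) (hM : ∀ e, M (e + 1) = M e - a e)
    (s : ℕ) (hs : s ≤ n) :
    ∀ k, k ≤ t → ∀ σ : St n,
    ∃ p : QP n (St n), ∀ w π C, s ≤ C → SInv M t s σ w π →
      ∃ σ', QP.ev (csc w π C) p = σ' ∧ SInv M t s σ' w π ∧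
        (∀ f < k, (grp s σ' f).card < 2 ^ a f) ∧
        QP.cost (csc w π C) p + 2 * Lam s σ ≤ 2 * Lam s σ' := by
  classical
  intro k
  induction k with
  | zero =>
    intro _ σ
    exact ⟨.ret σ, fun w π C hC hI => ⟨σ, rfl, hI, by simp, by simp⟩⟩
  | succ k ih =>
    intro hk σ
    obtain ⟨p, hp⟩ := ih (by omega) σ
    have : ∀ σ : St n, ∃ q : QP n (St n), ∀ w π C, s ≤ C → SInv M t s σ w π →
      (∀ f < k, (grp s σ f).card < 2 ^ a f) →
      ∃ σ', QP.ev (csc w π C) q = σ' ∧ SInv M t s σ' w π ∧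
        (∀ f < k + 1, (grp s σ' f).card < 2 ^ a f) ∧
        QP.cost (csc w π C) q + 2 * Lam s σ ≤ 2 * Lam s σ' := by
      intro σ
      by_cases hbig : 2 ^ a k ≤ (grp s σ k).card
      swap
      · refine ⟨.ret σ, fun w π C hC hI hf => ⟨σ, rfl, hI, ?_, by simp⟩⟩
        intro f hfk
        by_cases h : f = k
        · subst h; omega
        · exact hf f (by omega)
      by_cases h : ∀ j ∈ grp s σ k, (σ.V j).card ≤ 2 ^ M k
      swap
      · refine ⟨.ret σ, ?_⟩
        intro w π C hC hI
        exfalso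
        apply h
        intro j hj
        obtain ⟨h1, h2⟩ := (mem_grp _ _ _ _).mp hj
        have := hI.card_le j h1
        rwa [h2] at this
      obtain ⟨q, hq⟩ := refine_prog s hs σ.x σ.V (grp s σ k)
        (fun j hj => ((mem_grp _ _ _ _).mp hj).1) (M k) (min (a k) (M k)) (min_le_right _ _) h
      refine ⟨q.bind (fun V' => .ret ⟨σ.x, V', fun j => if j ∈ grp s σ k then k + 1
        else σ.lvl j⟩), ?_⟩
      intro w π C hC hI hf
      obtain ⟨V', e1, hc, hoff, hon, hcost⟩ := hq w π C hC hI.core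
      refine ⟨⟨σ.x, V', fun j => if j ∈ grp s σ k then k + 1 else σ.lvl j⟩, by simp [e1],
        ⟨hc, ?_, ?_⟩, ?_, ?_⟩
      · intro j hj
        dsimp only
        split_ifs
        · exact hk
        · exact hI.lvl_le j hj
      · intro j hj
        dsimp only
        split_ifs with hg
        · rw [hM]
          have := hon j hg
          rwa [show M k - min (a k) (M k) = M k - a k by omega] at this
        · rw [hoff j hg]; exact hI.card_le j hj
      · intro f hfk
        refine lt_of_le_of_lt (Finset.card_le_card (t := if f = k then ∅ else grp s σ f) ?_) ?_
        · intro j hj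
          obtain ⟨h1, h2⟩ := (mem_grp _ _ _ _).mp hj
          dsimp only at h2
          split_ifs at h2 with hg
          · omega
          · have hfk' : f ≠ k := by
              intro h3
              exact hg ((mem_grp _ _ _ _).mpr ⟨h1, by omega⟩)
            simp only [hfk', if_false]
            exact (mem_grp _ _ _ _).mpr ⟨h1, h2⟩
        · split_ifs with h3
          · simp
          · exact hf f (by omega)
      · have hLam : Lam s ⟨σ.x, V', fun j => if j ∈ grp s σ k then k + 1 else σ.lvl j⟩ =
            Lam s σ + (grp s σ k).card := by
          unfold Lam
          have h1 : (grp s σ k).card = ∑ j ∈ Finset.univ.filter (fun j : Fin n => (j : ℕ) < s),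
              if j ∈ grp s σ k then 1 else 0 := by
            rw [← Finset.sum_filter, Finset.sum_const, smul_eq_mul, mul_one]
            congr 1
            ext j
            simp only [Finset.mem_filter, Finset.mem_univ, true_and, mem_grp]
            tauto
          rw [h1, ← Finset.sum_add_distrib]
          apply Finset.sum_congr rfl
          intro j _
          dsimp only
          split_ifs with hg
          · rw [((mem_grp _ _ _ _).mp hg).2]
          · rfl
        rw [hLam]
        simp only [QP.cost_bind, QP.cost_ret]
        have : 2 ^ min (a k) (M k) ≤ 2 ^ a k := Nat.pow_le_pow_right (by norm_num) (min_le_left _ _)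
        omega
    choose q hq using this
    refine ⟨p.bind q, ?_⟩
    intro w π C hC hI
    obtain ⟨σ1, e1, hI1, hf1, hc1⟩ := hp w π C hC hI
    obtain ⟨σ2, e2, hI2, hf2, hc2⟩ := hq σ1 w π C hC hI1 hf1
    refine ⟨σ2, by simp [e1, e2], hI2, hf2, ?_⟩
    simp only [QP.cost_bind, e1]
    omega

/-- full invariant between two items -/
structure GInv {n : ℕ} (M a : ℕ → ℕ) (t s : ℕ) (σ : St n) (w : Fin n → Bool)
    (π : Equiv.Perm (Fin n)) : Prop where
  inv : SInv M t s σ w π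
  small : ∀ f < t, (grp s σ f).card < 2 ^ a f

open Classical in
/-- collision cost -/
noncomputable def collCost {n : ℕ} (M a : ℕ → ℕ) (t : ℕ) (s : ℕ) (σ : St n) (p : Fin n) : ℕ :=
  ∑ f ∈ Finset.range t, if Coll s σ f p then
    ∑ g ∈ Finset.range (f + 1), cc M (fun e => 2 ^ a e) g else 0

theorem step_prog {n : ℕ} (M a : ℕ → ℕ) (t : ℕ) (hM : ∀ e, M (e + 1) = M e - a e) (hMt : M t = 0)
    (L : ℕ) (hL : n ≤ 2 ^ L) (hML : M 0 ≤ L) (i : Fin n) (σ : St n) :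
    ∃ p : QP n (St n), ∀ w π, GInv M a t i σ w π →
      GInv M a t (i + 1) (QP.ev (csc w π (i + 1)) p) w π ∧
      QP.cost (csc w π (i + 1)) p + 2 * Lam i σ ≤ 2 + (L - M 0) * 3 +
        2 * Lam (i + 1) (QP.ev (csc w π (i + 1)) p) + collCost M a t i σ (π i) := by
  classical
  obtain ⟨p, hp⟩ := tryAdd_prog M (fun e => 2 ^ a e) t hMt i t 0 (by omega) σ
  have hq := fun σ1 : St n => multi_refine (i + 1) i.2 σ1.x {i} (by simp) (L - M 0) L (by omega)
    σ1.V (by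
      intro j hj
      exact (Finset.card_le_univ _).trans (by simpa using hL))
  choose q hq using hq
  choose r hr using cascade_prog (n := n) M a t hM (i + 1) i.2 t le_rfl
  refine ⟨p.bind (fun σ1 => (q σ1).bind (fun V => r ⟨σ1.x, V, Function.update σ1.lvl i 0⟩)), ?_⟩
  intro w π hG
  obtain ⟨σ1, e1, hI1, hC1, hmono1, hcost1⟩ := hp w π hG.inv (fun _ _ => Nat.zero_le _)
    (fun f _ hf => (hG.small f hf).le)
  obtain ⟨V', e2, hC2, hoff2, hon2, hcost2⟩ := hq σ1 w π (i + 1) le_rfl hC1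
  have hcases : ∀ j : Fin n, (j : ℕ) < i + 1 → j ≠ i → (j : ℕ) < i := by
    intro j hj h
    have : (j : ℕ) ≠ i := fun h' => h (Fin.ext h')
    omega
  have hI2 : SInv M t (i + 1) ⟨σ1.x, V', Function.update σ1.lvl i 0⟩ w π := by
    refine ⟨hC2, ?_, ?_⟩
    · intro j hj
      by_cases h : j = i
      · subst h; simp
      · simpa [h] using hI1.lvl_le j (hcases j hj h)
    · intro j hj
      by_cases h : j = i
      · subst h
        have := hon2 j (by simp)
        rw [show L - (L - M 0) = M 0 by omega] at this
        simpa using this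
      · have h3 := hoff2 j (by simpa using h)
        simpa [h, h3] using hI1.card_le j (hcases j hj h)
  obtain ⟨σ3, e3, hI3, hs3, hcost3⟩ := hr ⟨σ1.x, V', Function.update σ1.lvl i 0⟩ w π (i + 1) le_rfl
    hI2
  have hev : QP.ev (csc w π (i + 1)) (p.bind (fun σ1 => (q σ1).bind
      (fun V => r ⟨σ1.x, V, Function.update σ1.lvl i 0⟩))) = σ3 := by
    simp [e1, e2, e3]
  rw [hev]
  refine ⟨⟨hI3, hs3⟩, ?_⟩
  have hLam : Lam i σ ≤ Lam (i + 1) ⟨σ1.x, V', Function.update σ1.lvl i 0⟩ := by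
    unfold Lam
    refine le_trans (Finset.sum_le_sum (g := Function.update σ1.lvl i 0) ?_)
      (Finset.sum_le_sum_of_subset ?_)
    · intro j hj
      have hj' : (j : ℕ) < i := by simpa using hj
      have : j ≠ i := fun h => by subst h; omega
      simpa [this] using hmono1 j hj'
    · intro j hj
      have hj' : (j : ℕ) < i := by simpa using hj
      simp; omega
  have hcoll : collCost M a t i σ (π i) = ∑ f ∈ Finset.Ico 0 t,
          if Coll i σ f (π i) then ∑ g ∈ Finset.Ico 0 (f + 1), cc M (fun e => 2 ^ a e) g else 0 := by
    unfold collCost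
    simp only [Finset.range_eq_Ico]
  rw [hcoll]
  simp only [QP.cost_bind, e1, e2]
  simp only [Finset.card_singleton] at hcost2
  omega

theorem final_prog {n : ℕ} (M a : ℕ → ℕ) (t : ℕ) (hMt : M t = 0) :
    ∀ k, k ≤ t → ∀ σ : St n,
    ∃ p : QP n (St n), ∀ w π C, n ≤ C → GInv M a t n σ w π →
      ∃ σ', QP.ev (csc w π C) p = σ' ∧ GInv M a t n σ' w π ∧ (∀ j : Fin n, k ≤ σ'.lvl j) ∧
        QP.cost (csc w π C) p ≤ ∑ e ∈ Finset.range k, cc M (fun e => 2 ^ a e) e := by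
  classical
  intro k
  induction k with
  | zero =>
    intro _ σ
    exact ⟨.ret σ, fun w π C hC hI => ⟨σ, rfl, hI, by simp, by simp⟩⟩
  | succ k ih =>
    intro hk σ
    obtain ⟨p, hp⟩ := ih (by omega) σ
    choose q hq using fun σ : St n => finalize_prog M t hMt n le_rfl σ k
    refine ⟨p.bind q, ?_⟩
    intro w π C hC hI
    obtain ⟨σ1, e1, hI1, hl1, hc1⟩ := hp w π C hC hI
    obtain ⟨σ2, e2, hI2, hx2, hon2, hoff2, hV2, hc2⟩ := hq σ1 w π C hC hI1.inv
    refine ⟨σ2, by simp [e1, e2], ⟨hI2, ?_⟩, ?_, ?_⟩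
    · intro f hf
      refine lt_of_le_of_lt (Finset.card_le_card ?_) (hI1.small f hf)
      intro j hj
      obtain ⟨h1, h2⟩ := (mem_grp _ _ _ _).mp hj
      by_cases hg : j ∈ grp n σ1 k
      · have := hon2 j hg; omega
      · rw [hoff2 j hg] at h2
        exact (mem_grp _ _ _ _).mpr ⟨h1, h2⟩
    · intro j
      by_cases hg : j ∈ grp n σ1 k
      · rw [hon2 j hg]; exact hk
      · rw [hoff2 j hg]
        have h1 := hl1 j
        have h2 : σ1.lvl j ≠ k := fun h => hg ((mem_grp _ _ _ _).mpr ⟨j.2, h⟩)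
        omega
    · rw [Finset.sum_range_succ]
      simp only [QP.cost_bind, e1]
      have hcc : M k * (2 + (grp n σ1 k).card) ≤ cc M (fun e => 2 ^ a e) k := by
        unfold cc
        have := (hI1.small k (by omega)).le
        refine le_trans ?_ (Nat.le_add_right _ _)
        gcongr
      omega

/-- The prefix of the program that handles the first `s` items. -/
def mainP {n : ℕ} (step : Fin n → St n → QP n (St n)) : ℕ → QP n (St n)
  | 0 => .ret ⟨fun _ => false, fun _ => ∅, fun _ => 0⟩
  | s + 1 => (mainP step s).bind (fun σ => if h : s < n then (step ⟨s, h⟩ σ).cap (s + 1) else .ret σ)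

theorem csc_congr {n : ℕ} (w : Fin n → Bool) (π π' : Equiv.Perm (Fin n)) (s : ℕ) (hs : s ≤ n)
    (h : ∀ j : Fin n, (j : ℕ) < s → π j = π' j) : csc w π s = csc w π' s := by
  funext x
  have key : ∀ i, i ≤ s → (i ≤ sc w π x ↔ i ≤ sc w π' x) := by
    intro i hi
    rw [le_sc _ _ _ _ (by omega), le_sc _ _ _ _ (by omega)]
    constructor <;> intro h1 j hj
    · rw [← h j (by omega)]; exact h1 j hj
    · rw [h j (by omega)]; exact h1 j hj
  unfold csc
  apply le_antisymm
  · have := (key (min (sc w π x) s) (min_le_right _ _)).mp (min_le_left _ _)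
    omega
  · have := (key (min (sc w π' x) s) (min_le_right _ _)).mpr (min_le_left _ _)
    omega

theorem mainP_congr {n : ℕ} (step : Fin n → St n → QP n (St n)) (w : Fin n → Bool)
    (π π' : Equiv.Perm (Fin n)) (s : ℕ) (hs : s ≤ n)
    (h : ∀ j : Fin n, (j : ℕ) < s → π j = π' j) :
    QP.ev (sc w π) (mainP step s) = QP.ev (sc w π') (mainP step s) := by
  induction s with
  | zero => rfl
  | succ s ih =>
    have h1 := ih (by omega) (fun j hj => h j (by omega))
    have h2 := csc_congr w π π' (s + 1) hs h
    have hs' : s < n := by omega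
    simp only [mainP, QP.ev_bind, hs', dif_pos, QP.ev_cap, h1]
    exact congrArg (fun O => QP.ev O _) h2

theorem mainP_spec {n : ℕ} (M a : ℕ → ℕ) (t D : ℕ) (step : Fin n → St n → QP n (St n))
    (hstep : ∀ i σ w π, GInv M a t (i : Fin n) σ w π →
      GInv M a t (i + 1) (QP.ev (csc w π (i + 1)) (step i σ)) w π ∧
      QP.cost (csc w π (i + 1)) (step i σ) + 2 * Lam i σ ≤ D +
        2 * Lam (i + 1) (QP.ev (csc w π (i + 1)) (step i σ)) + collCost M a t i σ (π i))
    (w : Fin n → Bool) (π : Equiv.Perm (Fin n)) (s : ℕ) (hs : s ≤ n) :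
    GInv M a t s (QP.ev (sc w π) (mainP step s)) w π ∧
    QP.cost (sc w π) (mainP step s) ≤ s * D + 2 * Lam s (QP.ev (sc w π) (mainP step s)) +
      ∑ i : Fin n, if (i : ℕ) < s then
        collCost M a t i (QP.ev (sc w π) (mainP step i)) (π i) else 0 := by
  induction s with
  | zero =>
    refine ⟨⟨⟨⟨?_, ?_, ?_⟩, ?_, ?_⟩, ?_⟩, by simp [mainP]⟩
    · intro j hj; omega
    · intro j hj; omega
    · intro j k hj; omega
    · intro j hj; omega
    · intro j hj; omega
    · intro f hf
      have : grp 0 (QP.ev (sc w π) (mainP step 0)) f = ∅ := by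
        apply Finset.eq_empty_of_forall_notMem
        intro j hj
        have := ((mem_grp _ _ _ _).mp hj).1
        omega
      rw [this]; simp
  | succ s ih =>
    have hs' : s < n := by omega
    obtain ⟨h1, h2⟩ := ih (by omega)
    obtain ⟨h3, h4⟩ := hstep ⟨s, hs'⟩ _ w π h1
    have hev : QP.ev (sc w π) (mainP step (s + 1)) =
        QP.ev (csc w π (s + 1)) (step ⟨s, hs'⟩ (QP.ev (sc w π) (mainP step s))) := by
      simp only [mainP, QP.ev_bind, hs', dif_pos, QP.ev_cap]; rfl
    have hco : QP.cost (sc w π) (mainP step (s + 1)) = QP.cost (sc w π) (mainP step s) +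
        QP.cost (csc w π (s + 1)) (step ⟨s, hs'⟩ (QP.ev (sc w π) (mainP step s))) := by
      simp only [mainP, QP.cost_bind, hs', dif_pos, QP.cost_cap]; rfl
    rw [hev, hco]
    refine ⟨h3, ?_⟩
    have hsum : ∑ i : Fin n, (if (i : ℕ) < s + 1 then
        collCost M a t i (QP.ev (sc w π) (mainP step i)) (π i) else 0) =
        (∑ i : Fin n, if (i : ℕ) < s then
        collCost M a t i (QP.ev (sc w π) (mainP step i)) (π i) else 0) +
        collCost M a t s (QP.ev (sc w π) (mainP step s)) (π ⟨s, hs'⟩) := by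
      have h5 : collCost M a t s (QP.ev (sc w π) (mainP step s)) (π ⟨s, hs'⟩) =
          ∑ i : Fin n, if i = ⟨s, hs'⟩ then
            collCost M a t i (QP.ev (sc w π) (mainP step i)) (π i) else 0 := by
        rw [Finset.sum_ite_eq']; simp
      rw [h5, ← Finset.sum_add_distrib]
      apply Finset.sum_congr rfl
      intro i _
      by_cases h6 : i = ⟨s, hs'⟩
      · subst h6; simp
      · have : (i : ℕ) ≠ s := fun h => h6 (Fin.ext h)
        by_cases h7 : (i : ℕ) < s
        · simp [h6, h7, show (i : ℕ) < s + 1 by omega]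
        · simp [h6, h7, show ¬ ((i : ℕ) < s + 1) by omega]
    rw [hsum]
    have : (s + 1) * D = s * D + D := by ring
    dsimp only at h4
    omega

/-! ### Averaging over the secret permutation -/

theorem count_mem {n : ℕ} (i : Fin n) (S : Equiv.Perm (Fin n) → Finset (Fin n)) (B : ℕ)
    (hB : ∀ π, (S π).card ≤ B)
    (hS : ∀ π π' : Equiv.Perm (Fin n), (∀ j : Fin n, (j : ℕ) < i → π j = π' j) → S π = S π') :
    (n - i) * ∑ π : Equiv.Perm (Fin n), (if π i ∈ S π then 1 else 0) ≤
      Fintype.card (Equiv.Perm (Fin n)) * B := by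
  classical
  have h1 : ∀ k ∈ Finset.Ici i, ∑ π : Equiv.Perm (Fin n), (if π i ∈ S π then 1 else 0) =
      ∑ π : Equiv.Perm (Fin n), (if π k ∈ S π then 1 else 0) := by
    intro k hk
    have hk' : i ≤ k := by simpa using hk
    refine Fintype.sum_equiv (Equiv.mulRight (Equiv.swap i k)) _ _ ?_
    intro π
    have : S (π * Equiv.swap i k) = S π := by
      apply hS
      intro j hj
      have hj1 : j ≠ i := fun h => by subst h; omega
      have hj2 : j ≠ k := fun h => by
        subst h
        have : (i : ℕ) ≤ j := hk'
        omega
      simp [Equiv.swap_apply_of_ne_of_ne hj1 hj2]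
    simp [this]
  have h2 : (n - i) * ∑ π : Equiv.Perm (Fin n), (if π i ∈ S π then 1 else 0) =
      ∑ k ∈ Finset.Ici i, ∑ π : Equiv.Perm (Fin n), (if π k ∈ S π then 1 else 0) := by
    rw [← Finset.sum_congr rfl h1, Finset.sum_const, Fin.card_Ici, smul_eq_mul]
  rw [h2, Finset.sum_comm]
  have h3 : ∀ π : Equiv.Perm (Fin n),
      ∑ k ∈ Finset.Ici i, (if π k ∈ S π then 1 else 0) ≤ B := by
    intro π
    rw [← Finset.card_filter]
    refine le_trans (Finset.card_le_card_of_injOn π ?_ π.injective.injOn) (hB π)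
    intro k hk
    have := Finset.mem_coe.mp hk
    exact Finset.mem_coe.mpr (Finset.mem_filter.mp this).2
  refine (Finset.sum_le_sum (fun π _ => h3 π)).trans ?_
  simp

theorem sum_inv_le {n L : ℕ} (hn : 1 ≤ n) (hL : n ≤ 2 ^ L) :
    ∑ i : Fin n, (1 : ℝ) / ((n - (i : ℕ) : ℕ) : ℝ) ≤ L + 1 := by
  have h1 : ∑ i : Fin n, (1 : ℝ) / ((n - (i : ℕ) : ℕ) : ℝ) = ((harmonic n : ℚ) : ℝ) := by
    rw [Fin.sum_univ_eq_sum_range (fun i => (1 : ℝ) / ((n - i : ℕ) : ℝ)) n,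
      ← Finset.sum_range_reflect]
    unfold harmonic
    push_cast
    apply Finset.sum_congr rfl
    intro i hi
    have := Finset.mem_range.mp hi
    rw [show n - (n - 1 - i) = i + 1 by omega]
    push_cast
    rw [one_div]
  rw [h1]
  have h2 := harmonic_le_one_add_log n
  have h3 : Real.log n ≤ L := by
    have : Real.log n ≤ Real.log (2 ^ L) := by
      apply Real.log_le_log
      · exact_mod_cast hn
      · exact_mod_cast hL
    rw [Real.log_pow] at this
    have h4 : Real.log 2 ≤ 1 := by
      have := Real.log_two_lt_d9
      linarith
    nlinarith [(Nat.cast_nonneg L : (0 : ℝ) ≤ L)]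
  linarith

open Classical in
theorem coll_count {n : ℕ} (M a : ℕ → ℕ) (t D : ℕ) (step : Fin n → St n → QP n (St n))
    (hstep : ∀ i σ w π, GInv M a t (i : Fin n) σ w π →
      GInv M a t (i + 1) (QP.ev (csc w π (i + 1)) (step i σ)) w π ∧
      QP.cost (csc w π (i + 1)) (step i σ) + 2 * Lam i σ ≤ D +
        2 * Lam (i + 1) (QP.ev (csc w π (i + 1)) (step i σ)) + collCost M a t i σ (π i))
    (w : Fin n → Bool) (i : Fin n) (f : ℕ) (hf : f < t) :
    (n - i) * ∑ π : Equiv.Perm (Fin n),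
        (if Coll i (QP.ev (sc w π) (mainP step i)) f (π i) then 1 else 0) ≤
      Fintype.card (Equiv.Perm (Fin n)) * (2 ^ a f * 2 ^ M f) := by
  have h := count_mem i (fun π => (grp i (QP.ev (sc w π) (mainP step i)) f).biUnion
    (QP.ev (sc w π) (mainP step i)).V) (2 ^ a f * 2 ^ M f) ?_ ?_
  · refine le_trans (le_of_eq ?_) h
    congr 1
    apply Finset.sum_congr rfl
    intro π _
    congr 1
    simp only [Coll, Finset.mem_biUnion, mem_grp, eq_iff_iff]
    constructor
    · rintro ⟨j, h1, h2, h3⟩; exact ⟨j, ⟨h1, h2⟩, h3⟩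
    · rintro ⟨j, ⟨h1, h2⟩, h3⟩; exact ⟨j, h1, h2, h3⟩
  · intro π
    have hG := (mainP_spec M a t D step hstep w π i i.2.le).1
    refine le_trans (Finset.card_biUnion_le_card_mul _ _ (2 ^ M f) ?_) ?_
    · intro j hj
      obtain ⟨h1, h2⟩ := (mem_grp _ _ _ _).mp hj
      have := hG.inv.card_le j h1
      rwa [h2] at this
    · exact Nat.mul_le_mul_right _ (hG.small f hf).le
  · intro π π' hπ
    rw [mainP_congr step w π π' i i.2.le hπ]

/-- The complete algorithm, with its average cost. -/
theorem algo {n : ℕ} (hn : 1 ≤ n) (M a : ℕ → ℕ) (t : ℕ) (hM : ∀ e, M (e + 1) = M e - a e)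
    (hMt : M t = 0) (L : ℕ) (hL : n ≤ 2 ^ L) (hML : M 0 ≤ L) :
    ∃ p : QP n (St n),
      (∀ w w' : Fin n → Bool, ∀ π π' : Equiv.Perm (Fin n),
        QP.ev (sc w π) p = QP.ev (sc w' π') p → w = w' ∧ π = π') ∧
      ∀ w : Fin n → Bool, ∑ π : Equiv.Perm (Fin n), (QP.cost (sc w π) p : ℝ) ≤
        Fintype.card (Equiv.Perm (Fin n)) * ((n * (2 + (L - M 0) * 3) + 2 * (n * t) +
          ∑ e ∈ Finset.range t, cc M (fun e => 2 ^ a e) e : ℕ) +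
          (L + 1) * (∑ f ∈ Finset.range t, (∑ g ∈ Finset.range (f + 1),
            cc M (fun e => 2 ^ a e) g) * (2 ^ a f * 2 ^ M f) : ℕ)) := by
  classical
  choose step hstep using step_prog (n := n) M a t hM hMt L hL hML
  choose fin hfin using final_prog (n := n) M a t hMt t le_rfl
  have hspec := fun w π => mainP_spec M a t _ step hstep w π n le_rfl
  refine ⟨(mainP step n).bind (fun σ => (fin σ).cap n), ?_, ?_⟩
  · intro w w' π π' h
    obtain ⟨σ, e1, hG, hl, -⟩ := hfin _ w π n le_rfl (hspec w π).1
    obtain ⟨σ', e1', hG', hl', -⟩ := hfin _ w' π' n le_rfl (hspec w' π').1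
    have hσ : σ = σ' := by
      rw [← e1, ← e1']
      simp only [QP.ev_bind, QP.ev_cap] at h
      exact h
    subst hσ
    have hπ : π = π' := by
      ext j
      have hc := hG.inv.card_le j j.2
      rw [show σ.lvl j = t from le_antisymm (hG.inv.lvl_le j j.2) (hl j), hMt, pow_zero] at hc
      rw [Finset.card_le_one.mp hc _ (hG.inv.core.mem j j.2) _ (hG'.inv.core.mem j j.2)]
    subst hπ
    refine ⟨?_, rfl⟩
    funext j
    rw [hG.inv.core.agree j j.2, hG'.inv.core.agree j j.2]
  · intro w
    set K := (n * (2 + (L - M 0) * 3) + 2 * (n * t) +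
          ∑ e ∈ Finset.range t, cc M (fun e => 2 ^ a e) e : ℕ) with hK
    have hcost : ∀ π, QP.cost (sc w π) ((mainP step n).bind (fun σ => (fin σ).cap n)) ≤ K +
        ∑ i : Fin n, collCost M a t i (QP.ev (sc w π) (mainP step i)) (π i) := by
      intro π
      obtain ⟨h1, h2⟩ := hspec w π
      obtain ⟨σ, e1, hG, hl, hc⟩ := hfin _ w π n le_rfl h1
      simp only [QP.cost_bind, QP.cost_cap]
      change _ + QP.cost (csc w π n) _ ≤ _
      have hLam : Lam n (QP.ev (sc w π) (mainP step n)) ≤ n * t := by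
        unfold Lam
        refine (Finset.sum_le_card_nsmul _ _ t ?_).trans ?_
        · intro j _
          exact h1.inv.lvl_le j j.2
        · rw [smul_eq_mul]
          apply Nat.mul_le_mul_right
          exact (Finset.card_le_univ _).trans (by simp)
      simp only [Fin.is_lt, if_true] at h2
      omega
    set A : ℕ → ℕ := fun f => ∑ g ∈ Finset.range (f + 1), cc M (fun e => 2 ^ a e) g with hA
    set N : ℝ := ((Fintype.card (Equiv.Perm (Fin n)) : ℕ) : ℝ) with hN
    have hone : ∀ i : Fin n, ∀ f ∈ Finset.range t, (∑ π : Equiv.Perm (Fin n),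
        (if Coll i (QP.ev (sc w π) (mainP step i)) f (π i) then (1 : ℝ) else 0)) ≤
        N * (2 ^ a f * 2 ^ M f : ℕ) * (1 / ((n - (i : ℕ) : ℕ) : ℝ)) := by
      intro i f hf
      have h := coll_count M a t _ step hstep w i f (Finset.mem_range.mp hf)
      have hpos : (0 : ℝ) < ((n - (i : ℕ) : ℕ) : ℝ) := by
        have := i.2
        exact_mod_cast (by omega : 0 < n - (i : ℕ))
      rw [mul_one_div, le_div_iff₀ hpos, mul_comm]
      have h' : (((n - (i : ℕ)) * ∑ π : Equiv.Perm (Fin n),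
        (if Coll i (QP.ev (sc w π) (mainP step i)) f (π i) then 1 else 0) : ℕ) : ℝ) ≤
        ((Fintype.card (Equiv.Perm (Fin n)) * (2 ^ a f * 2 ^ M f) : ℕ) : ℝ) := by exact_mod_cast h
      rw [Nat.cast_mul, Nat.cast_mul, Nat.cast_sum] at h'
      simpa only [Nat.cast_ite, Nat.cast_one, Nat.cast_zero] using h'
    calc ∑ π : Equiv.Perm (Fin n),
          (QP.cost (sc w π) ((mainP step n).bind (fun σ => (fin σ).cap n)) : ℝ)
        ≤ ∑ π : Equiv.Perm (Fin n), ((K : ℝ) + ∑ i : Fin n, ∑ f ∈ Finset.range t,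
          (A f : ℝ) * (if Coll i (QP.ev (sc w π) (mainP step i)) f (π i) then (1 : ℝ) else 0)) := by
          apply Finset.sum_le_sum
          intro π _
          refine (Nat.cast_le.mpr (hcost π)).trans (le_of_eq ?_)
          push_cast
          congr 1
          apply Finset.sum_congr rfl
          intro i _
          unfold collCost
          push_cast
          apply Finset.sum_congr rfl
          intro f _
          split_ifs <;> simp [hA]
      _ = N * K + ∑ i : Fin n, ∑ f ∈ Finset.range t, (A f : ℝ) * ∑ π : Equiv.Perm (Fin n),
          (if Coll i (QP.ev (sc w π) (mainP step i)) f (π i) then (1 : ℝ) else 0) := by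
          rw [Finset.sum_add_distrib, Finset.sum_comm]
          congr 1
          · simp [hN]
          · apply Finset.sum_congr rfl
            intro i _
            rw [Finset.sum_comm]
            apply Finset.sum_congr rfl
            intro f _
            rw [Finset.mul_sum]
      _ ≤ N * K + ∑ i : Fin n, ∑ f ∈ Finset.range t, (A f : ℝ) *
          (N * (2 ^ a f * 2 ^ M f : ℕ) * (1 / ((n - (i : ℕ) : ℕ) : ℝ))) := by
          gcongr with i _ f hf
          exact hone i f hf
      _ = N * (K + (∑ i : Fin n, (1 : ℝ) / ((n - (i : ℕ) : ℕ) : ℝ)) *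
          (∑ f ∈ Finset.range t, A f * (2 ^ a f * 2 ^ M f) : ℕ)) := by
          rw [mul_add, Finset.sum_mul, Finset.mul_sum]
          congr 1
          apply Finset.sum_congr rfl
          intro i _
          rw [Nat.cast_sum, Finset.mul_sum, Finset.mul_sum]
          apply Finset.sum_congr rfl
          intro f _
          rw [Nat.cast_mul (A f)]
          ring
      _ ≤ _ := by
          gcongr
          exact sum_inv_le hn hL

/-! ### Parameters -/

/-- exponents of the candidate set sizes -/
def Mx (H : ℕ) : ℕ → ℕ
  | 0 => H - 2
  | e + 1 => Mx H e - (H - Mx H e) / 2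

def ax (H : ℕ) (e : ℕ) : ℕ := (H - Mx H e) / 2

theorem Mx_succ (H e : ℕ) : Mx H (e + 1) = Mx H e - ax H e := rfl

theorem Mx_le (H e : ℕ) : Mx H e ≤ H := by
  induction e with
  | zero => simp [Mx]
  | succ e ih => rw [Mx_succ]; omega

theorem Mx_anti (H : ℕ) : Antitone (Mx H) :=
  antitone_nat_of_succ_le (fun e => by rw [Mx_succ]; omega)

theorem ax_mono (H : ℕ) : Monotone (ax H) := by
  intro e f h
  have := Mx_anti H h
  unfold ax
  omega

theorem Mx_growth (H k : ℕ) : Mx H (2 * k) = 0 ∨ 2 ^ (k + 1) ≤ H - Mx H (2 * k) := by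
  induction k with
  | zero =>
    simp only [Mx, mul_zero]
    by_cases h : H ≤ 2
    · left; omega
    · right; simp; omega
  | succ k ih =>
    have e1 : Mx H (2 * (k + 1)) = Mx H (2 * k + 1) - ax H (2 * k + 1) := Mx_succ H (2 * k + 1)
    have e2 : Mx H (2 * k + 1) = Mx H (2 * k) - ax H (2 * k) := Mx_succ H (2 * k)
    have h2 : ax H (2 * k + 1) = (H - Mx H (2 * k + 1)) / 2 := rfl
    have h3 : ax H (2 * k) = (H - Mx H (2 * k)) / 2 := rfl
    have h4 := Mx_le H (2 * k)
    have h5 : 2 ^ (k + 1) ≥ 2 := by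
      have : 0 < 2 ^ k := by positivity
      rw [pow_succ]; omega
    have h6 : 2 ^ (k + 1 + 1) = 2 * 2 ^ (k + 1) := by ring
    rw [h6]
    omega

theorem Mx_final (H k : ℕ) (h : H < 2 ^ (k + 1)) : Mx H (2 * k) = 0 := by
  rcases Mx_growth H k with h1 | h1
  · exact h1
  · omega

theorem cc_le (H L e f : ℕ) (hHL : H ≤ L) (hef : e ≤ f) :
    cc (Mx H) (fun e => 2 ^ ax H e) e ≤ (3 * L + 2) * 2 ^ ax H f := by
  unfold cc
  have h1 : Mx H e ≤ L := (Mx_le H e).trans hHL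
  have h2 : 2 ^ ax H e ≤ 2 ^ ax H f := Nat.pow_le_pow_right (by norm_num) (ax_mono H hef)
  have h3 : 1 ≤ 2 ^ ax H f := Nat.one_le_two_pow
  calc Mx H e * (2 + 2 ^ ax H e) + 2 ≤ L * (2 * 2 ^ ax H f + 2 ^ ax H f) + 2 * 2 ^ ax H f := by
        gcongr <;> omega
    _ = _ := by ring

theorem coll_total (H L t : ℕ) (hHL : H ≤ L) :
    ∑ f ∈ Finset.range t, (∑ g ∈ Finset.range (f + 1),
            cc (Mx H) (fun e => 2 ^ ax H e) g) * (2 ^ ax H f * 2 ^ Mx H f) ≤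
      t * (t * (3 * L + 2) * 2 ^ H) := by
  refine (Finset.sum_le_card_nsmul _ _ (t * (3 * L + 2) * 2 ^ H) ?_).trans (by simp)
  intro f hf
  have hft := Finset.mem_range.mp hf
  have h1 : ∑ g ∈ Finset.range (f + 1), cc (Mx H) (fun e => 2 ^ ax H e) g ≤
      t * ((3 * L + 2) * 2 ^ ax H f) := by
    refine (Finset.sum_le_card_nsmul _ _ ((3 * L + 2) * 2 ^ ax H f) ?_).trans ?_
    · intro g hg
      exact cc_le H L g f hHL (by have := Finset.mem_range.mp hg; omega)
    · simp only [Finset.card_range, smul_eq_mul]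
      exact Nat.mul_le_mul_right _ hft
  have h2 : 2 ^ ax H f * (2 ^ ax H f * 2 ^ Mx H f) ≤ 2 ^ H := by
    rw [← pow_add, ← pow_add]
    apply Nat.pow_le_pow_right (by norm_num)
    have := Mx_le H f
    unfold ax
    omega
  calc _ ≤ t * ((3 * L + 2) * 2 ^ ax H f) * (2 ^ ax H f * 2 ^ Mx H f) :=
        Nat.mul_le_mul_right _ h1
    _ = t * (3 * L + 2) * (2 ^ ax H f * (2 ^ ax H f * 2 ^ Mx H f)) := by ring
    _ ≤ _ := Nat.mul_le_mul_left _ h2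

theorem fin_total (H L t : ℕ) (hHL : H ≤ L) :
    ∑ f ∈ Finset.range t, cc (Mx H) (fun e => 2 ^ ax H e) f ≤ t * ((3 * L + 2) * 2 ^ H) := by
  refine (Finset.sum_le_card_nsmul _ _ ((3 * L + 2) * 2 ^ H) ?_).trans (by simp)
  intro f _
  refine (cc_le H L f f hHL le_rfl).trans ?_
  apply Nat.mul_le_mul_left
  apply Nat.pow_le_pow_right (by norm_num)
  unfold ax
  omega

theorem pow4_le (m : ℕ) : m ^ 4 ≤ 256 * 2 ^ m := by
  have h1 : m ≤ 4 * 2 ^ (m / 4) := by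
    have : m / 4 < 2 ^ (m / 4) := Nat.lt_two_pow_self
    omega
  calc m ^ 4 ≤ (4 * 2 ^ (m / 4)) ^ 4 := Nat.pow_le_pow_left h1 4
    _ = 256 * 2 ^ (m / 4 * 4) := by rw [mul_pow, ← pow_mul]; norm_num
    _ ≤ 256 * 2 ^ m := by
        apply Nat.mul_le_mul_left
        apply Nat.pow_le_pow_right (by norm_num)
        omega

theorem size_bound (n L ℓ : ℕ) (hL : 2 ^ L ≤ 2 * n) (hℓ : L + 1 ≤ 2 ^ ℓ) :
    (L + 1) ^ 4 * 2 ^ (L - 4 * ℓ) ≤ 1024 * n := by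
  by_cases h : 4 * ℓ ≤ L
  · have h1 : (L + 1) ^ 4 ≤ 2 ^ (4 * ℓ) := by
      rw [mul_comm, pow_mul]; exact Nat.pow_le_pow_left hℓ 4
    calc (L + 1) ^ 4 * 2 ^ (L - 4 * ℓ) ≤ 2 ^ (4 * ℓ) * 2 ^ (L - 4 * ℓ) :=
          Nat.mul_le_mul_right _ h1
      _ = 2 ^ L := by rw [← pow_add]; congr 1; omega
      _ ≤ _ := by omega
  · have h1 := pow4_le (L + 1)
    rw [show L - 4 * ℓ = 0 by omega, pow_zero, mul_one]
    have h2 : 2 ^ (L + 1) = 2 * 2 ^ L := by ring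
    omega

theorem algo_bound (n L ℓ : ℕ) (hn : 1 ≤ n) (hL1 : n ≤ 2 ^ L) (hL2 : 2 ^ L ≤ 2 * n)
    (hℓ : L + 1 ≤ 2 ^ ℓ) (hℓ2 : ℓ ≤ L + 1) (hℓ1 : 1 ≤ ℓ) :
    ∃ p : QP n (St n),
      (∀ w w' : Fin n → Bool, ∀ π π' : Equiv.Perm (Fin n),
        QP.ev (sc w π) p = QP.ev (sc w' π') p → w = w' ∧ π = π') ∧
      ∀ w : Fin n → Bool, ∑ π : Equiv.Perm (Fin n), (QP.cost (sc w π) p : ℝ) ≤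
        Fintype.card (Equiv.Perm (Fin n)) * (18456 * n * ℓ) := by
  set H := L - 4 * ℓ with hH
  have hHL : H ≤ L := by omega
  have hM0 : Mx H 0 = H - 2 := rfl
  obtain ⟨p, hp1, hp2⟩ := algo hn (Mx H) (ax H) (2 * ℓ) (Mx_succ H)
    (Mx_final H ℓ (by rw [pow_succ]; omega)) L hL1 (by omega)
  refine ⟨p, hp1, fun w => (hp2 w).trans ?_⟩
  gcongr
  have h1 := coll_total H L (2 * ℓ) hHL
  have h2 := fin_total H L (2 * ℓ) hHL
  have h3 := size_bound n L ℓ hL2 hℓ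
  rw [← hH] at h3
  have h4 : (L + 1) * (2 * ℓ * (2 * ℓ * (3 * L + 2) * 2 ^ H)) ≤ 12288 * n := by
    calc (L + 1) * (2 * ℓ * (2 * ℓ * (3 * L + 2) * 2 ^ H))
        ≤ (L + 1) * (2 * (L + 1) * (2 * (L + 1) * (3 * (L + 1)) * 2 ^ H)) := by
          gcongr; omega
      _ = 12 * ((L + 1) ^ 4 * 2 ^ H) := by ring
      _ ≤ _ := by omega
  have h5 : 2 * ℓ * ((3 * L + 2) * 2 ^ H) ≤ 6144 * n := by
    calc 2 * ℓ * ((3 * L + 2) * 2 ^ H)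
        ≤ 2 * (L + 1) * ((3 * (L + 1)) * 2 ^ H) * ((L + 1) ^ 2) := by
          refine le_trans ?_ (Nat.le_mul_of_pos_right _ (by positivity))
          gcongr; omega
      _ = 6 * ((L + 1) ^ 4 * 2 ^ H) := by ring
      _ ≤ _ := by omega
  have h6 : n * (2 + (L - Mx H 0) * 3) ≤ n * (8 + 12 * ℓ) := by
    apply Nat.mul_le_mul_left
    omega
  have h7 : (n * (2 + (L - Mx H 0) * 3) + 2 * (n * (2 * ℓ)) +
      ∑ e ∈ Finset.range (2 * ℓ), cc (Mx H) (fun e => 2 ^ ax H e) e) +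
      (L + 1) * (∑ f ∈ Finset.range (2 * ℓ), (∑ g ∈ Finset.range (f + 1),
            cc (Mx H) (fun e => 2 ^ ax H e) g) * (2 ^ ax H f * 2 ^ Mx H f)) ≤
      18456 * n * ℓ := by
    have h8 := Nat.mul_le_mul_left (L + 1) h1
    have h9 : n ≤ n * ℓ := Nat.le_mul_of_pos_right _ hℓ1
    calc _ ≤ n * (8 + 12 * ℓ) + 2 * (n * (2 * ℓ)) + 6144 * n + 12288 * n := by omega
      _ = 18440 * n + 16 * (n * ℓ) := by ring
      _ ≤ 18440 * (n * ℓ) + 16 * (n * ℓ) := by omega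
      _ = _ := by ring
  exact_mod_cast h7

theorem ell_bound (n : ℕ) (hn : 4 ≤ n) :
    ∃ L ℓ : ℕ, n ≤ 2 ^ L ∧ 2 ^ L ≤ 2 * n ∧ L + 1 ≤ 2 ^ ℓ ∧ ℓ ≤ L + 1 ∧ 1 ≤ ℓ ∧
      (ℓ : ℝ) ≤ 3 * Real.logb 2 (Real.logb 2 n) := by
  have hL1 : n ≤ 2 ^ Nat.clog 2 n := Nat.le_pow_clog (by norm_num) n
  have hL2 : 2 ^ (Nat.clog 2 n - 1) < n := Nat.pow_pred_clog_lt_self (by norm_num) (by omega)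
  set L := Nat.clog 2 n with hL
  have hL3 : 2 ≤ L := by
    by_contra h
    have : 2 ^ L ≤ 2 ^ 1 := Nat.pow_le_pow_right (by norm_num) (by omega)
    omega
  have hl1 : L + 1 ≤ 2 ^ Nat.clog 2 (L + 1) := Nat.le_pow_clog (by norm_num) _
  have hl2 : 2 ^ (Nat.clog 2 (L + 1) - 1) < L + 1 :=
    Nat.pow_pred_clog_lt_self (by norm_num) (by omega)
  set ℓ := Nat.clog 2 (L + 1) with hl
  have hl3 : 1 ≤ ℓ := by
    by_contra h
    rw [show ℓ = 0 by omega] at hl1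
    omega
  refine ⟨L, ℓ, hL1, ?_, hl1, ?_, hl3, ?_⟩
  · have : 2 ^ L = 2 * 2 ^ (L - 1) := by
      rw [← pow_succ']; congr 1; omega
    omega
  · have : ℓ - 1 < 2 ^ (ℓ - 1) := Nat.lt_two_pow_self
    omega
  · have hn' : (4 : ℝ) ≤ n := by exact_mod_cast hn
    have h1 : (L : ℝ) - 1 ≤ Real.logb 2 n := by
      rw [Real.le_logb_iff_rpow_le (by norm_num) (by linarith)]
      have : ((2 : ℝ) ^ ((L : ℝ) - 1)) = ((2 ^ (L - 1) : ℕ) : ℝ) := by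
        rw [show (L : ℝ) - 1 = ((L - 1 : ℕ) : ℝ) by rw [Nat.cast_sub (by omega)]; simp,
          Real.rpow_natCast]
        push_cast; rfl
      rw [this]
      exact_mod_cast hL2.le
    have h2 : (2 : ℝ) ≤ Real.logb 2 n := by
      rw [Real.le_logb_iff_rpow_le (by norm_num) (by linarith)]
      norm_num; linarith
    have h3 : (1 : ℝ) ≤ Real.logb 2 (Real.logb 2 n) := by
      rw [Real.le_logb_iff_rpow_le (by norm_num) (by linarith)]
      norm_num; linarith
    have h4 : (ℓ : ℝ) - 2 ≤ Real.logb 2 (Real.logb 2 n) := by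
      rw [Real.le_logb_iff_rpow_le (by norm_num) (by linarith)]
      have : ((2 : ℝ) ^ ((ℓ : ℝ) - 2)) = ((2 ^ (ℓ - 1) : ℕ) : ℝ) / 2 := by
        rw [show (ℓ : ℝ) - 2 = ((ℓ - 1 : ℕ) : ℝ) - 1 by rw [Nat.cast_sub (by omega)]; push_cast; ring,
          Real.rpow_sub (by norm_num), Real.rpow_natCast]
        push_cast; simp
      rw [this]
      have h5 : ((2 ^ (ℓ - 1) : ℕ) : ℝ) ≤ L := by exact_mod_cast (by omega : 2 ^ (ℓ - 1) ≤ L)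
      linarith
    linarith

theorem tsum_map_uniform {ι γ : Type} [Fintype ι] [Nonempty ι] (φ : ι → γ) (T : γ → ℝ≥0∞) :
    ∑' g, ((PMF.uniformOfFintype ι).map φ) g * T g =
      ∑ i, (Fintype.card ι : ℝ≥0∞)⁻¹ * T (φ i) := by
  classical
  simp only [PMF.map_apply, PMF.uniformOfFintype_apply]
  simp only [← ENNReal.tsum_mul_right]
  rw [ENNReal.tsum_comm, tsum_fintype]
  apply Finset.sum_congr rfl
  intro i _
  rw [tsum_eq_single (φ i)]
  · simp
  · intro g hg
    simp [hg]

/-- The randomized query complexity of the HiddenPermutation problem is `O(n log log n)`. -/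
theorem randomized_upper_bound :
    ∃ C : ℝ, 0 < C ∧ ∀ n : ℕ, 4 ≤ n →
      ∃ D : PMF (List ℕ → Fin n → Bool), D.support.Finite ∧
        ∀ (z : Fin n → Bool) (π : Equiv.Perm (Fin n)),
          ∑' g, D g * (timeToIdentify n g z π : ℝ≥0∞) ≤
            ENNReal.ofReal (C * n * Real.logb 2 (Real.logb 2 n)) := by
  classical
  refine ⟨55368, by norm_num, ?_⟩
  intro n hn
  obtain ⟨L, ℓ, hL1, hL2, hℓ, hℓ2, hℓ1, hℓ3⟩ := ell_bound n hn
  obtain ⟨p, hp1, hp2⟩ := algo_bound n L ℓ (by omega) hL1 hL2 hℓ hℓ2 hℓ1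
  refine ⟨(PMF.uniformOfFintype (Equiv.Perm (Fin n))).map
    (fun σ h i => QP.query (QP.walk p h) (σ i)), ?_, ?_⟩
  · rw [PMF.support_map]
    exact Set.toFinite _
  · intro z π
    rw [tsum_map_uniform, ← Finset.mul_sum]
    have h1 : ∑ σ : Equiv.Perm (Fin n), ((timeToIdentify n
        (fun h i => QP.query (QP.walk p h) (σ i)) z π : ℕ∞) : ℝ≥0∞) ≤
        ∑ σ : Equiv.Perm (Fin n), ((QP.cost (sc (fun j => z (π j)) (π.trans σ)) p : ℕ) : ℝ≥0∞) := by
      apply Finset.sum_le_sum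
      intro σ _
      have := ENat.toENNReal_le.mpr (time_le p hp1 z π σ)
      simpa using this
    have h2 : ∑ σ : Equiv.Perm (Fin n),
        ((QP.cost (sc (fun j => z (π j)) (π.trans σ)) p : ℕ) : ℝ≥0∞) =
        ∑ τ : Equiv.Perm (Fin n), ((QP.cost (sc (fun j => z (π j)) τ) p : ℕ) : ℝ≥0∞) := by
      refine Fintype.sum_equiv (Equiv.mulRight π) _ _ ?_
      intro σ
      rfl
    have h3 : ∑ τ : Equiv.Perm (Fin n), ((QP.cost (sc (fun j => z (π j)) τ) p : ℕ) : ℝ≥0∞) ≤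
        (Fintype.card (Equiv.Perm (Fin n)) : ℝ≥0∞) *
          ENNReal.ofReal (55368 * n * Real.logb 2 (Real.logb 2 n)) := by
      have h4 := hp2 (fun j => z (π j))
      have h5 : ((Fintype.card (Equiv.Perm (Fin n)) : ℕ) : ℝ) * (18456 * n * ℓ) ≤
          (Fintype.card (Equiv.Perm (Fin n)) : ℕ) *
            (55368 * n * Real.logb 2 (Real.logb 2 n)) := by
        apply mul_le_mul_of_nonneg_left _ (Nat.cast_nonneg _)
        have := mul_le_mul_of_nonneg_left hℓ3 (by positivity : (0 : ℝ) ≤ 18456 * n)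
        linarith
      have h6 := ENNReal.ofReal_le_ofReal (h4.trans h5)
      rw [ENNReal.ofReal_mul (Nat.cast_nonneg _), ENNReal.ofReal_natCast, ← Nat.cast_sum,
        ENNReal.ofReal_natCast, Nat.cast_sum] at h6
      exact h6
    refine (mul_le_mul_right (h1.trans (h2.le.trans h3)) _).trans (le_of_eq ?_)
    rw [← mul_assoc, ENNReal.inv_mul_cancel, one_mul]
    · exact_mod_cast Fintype.card_ne_zero
    · exact ENNReal.natCast_ne_top _
end

section
/- There is a constant c > 0 such that for all sufficiently large n, for every probability distribution D over deterministic strategies for the HiddenPermutation problem with n positions, there exists a secret (z,π) ∈ {0,1}^n × S_n such that the expectation over g ∼ D of T(g,z,π) is at least c·n·log₂ log₂ n. -/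
open scoped ENNReal

namespace HP

open Finset

/-- alternating bits -/
def bit (j : ℕ) : Bool := decide (j % 2 = 0)

/-- the string attached to a permutation -/
def zof {n : ℕ} (σ : Equiv.Perm (Fin n)) : Fin n → Bool := fun v => bit (σ.symm v : Fin n)

/-- the history of scores -/
def Hist {n : ℕ} (g : List ℕ → Fin n → Bool) (t : ℕ) (σ : Equiv.Perm (Fin n)) : List ℕ :=
  histScores n g (zof σ) σ t

/-- the query at time t -/
def X {n : ℕ} (g : List ℕ → Fin n → Bool) (t : ℕ) (σ : Equiv.Perm (Fin n)) : Fin n → Bool :=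
  g (Hist g t σ)

/-- the score at time t -/
def S {n : ℕ} (g : List ℕ → Fin n → Bool) (t : ℕ) (σ : Equiv.Perm (Fin n)) : ℕ :=
  score n (zof σ) σ (X g t σ)

theorem Hist_succ {n : ℕ} (g : List ℕ → Fin n → Bool) (t : ℕ) (σ : Equiv.Perm (Fin n)) :
    Hist g (t+1) σ = Hist g t σ ++ [S g t σ] := rfl

theorem score_le {n : ℕ} (z : Fin n → Bool) (σ : Equiv.Perm (Fin n)) (x : Fin n → Bool) :
    score n z σ x ≤ n := Nat.findGreatest_le n

theorem le_score {n : ℕ} (σ : Equiv.Perm (Fin n)) (x : Fin n → Bool) (k : ℕ) (hk : k ≤ n) :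
    k ≤ score n (zof σ) σ x ↔ ∀ j : Fin n, (j : ℕ) < k → x (σ j) = bit j := by
  constructor
  · intro h j hj
    have := Nat.findGreatest_spec (P := fun i => ∀ j : Fin n, (j : ℕ) < i → zof σ (σ j) = x (σ j))
      (m := 0) (n := n) (Nat.zero_le _) (by intro j hj; omega)
    have := this j (lt_of_lt_of_le hj h)
    rw [← this]; simp [zof]
  · intro h
    apply Nat.le_findGreatest hk
    intro j hj
    rw [h j hj]; simp [zof]

theorem score_pass {n : ℕ} (σ : Equiv.Perm (Fin n)) (x : Fin n → Bool) (j : Fin n)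
    (h : (j : ℕ) < score n (zof σ) σ x) : x (σ j) = bit j :=
  (le_score σ x _ (score_le _ _ _)).1 le_rfl j h

theorem score_fail {n : ℕ} (σ : Equiv.Perm (Fin n)) (x : Fin n → Bool) (j : Fin n)
    (h : score n (zof σ) σ x = (j : ℕ)) : x (σ j) ≠ bit j := by
  intro h'
  have : (j : ℕ) + 1 ≤ score n (zof σ) σ x := by
    rw [le_score σ x _ (by omega)]
    intro k hk
    rcases Nat.lt_succ_iff_lt_or_eq.1 hk with h1 | h1
    · exact score_pass σ x k (by omega)
    · have : k = j := Fin.ext h1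
      rw [this]; exact h'
  omega

theorem score_eq {n : ℕ} (σ : Equiv.Perm (Fin n)) (x : Fin n → Bool) (j : Fin n)
    (h : (j : ℕ) ≤ score n (zof σ) σ x) (h' : x (σ j) ≠ bit j) :
    score n (zof σ) σ x = (j : ℕ) := by
  by_contra hne
  exact h' (score_pass σ x j (by omega))

theorem score_congr {n : ℕ} (σ σ' : Equiv.Perm (Fin n)) (x : Fin n → Bool)
    (h : ∀ j : Fin n, (j : ℕ) ≤ score n (zof σ) σ x → x (σ' j) = x (σ j)) :
    score n (zof σ') σ' x = score n (zof σ) σ x := by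
  have h1 : score n (zof σ) σ x ≤ score n (zof σ') σ' x := by
    rw [le_score σ' x _ (score_le _ _ _)]
    intro j hj
    rw [h j hj.le]; exact score_pass σ x j hj
  by_contra hne
  have h2 : score n (zof σ) σ x < n := by
    have := score_le (zof σ') σ' x
    omega
  have h3 := score_fail σ x ⟨_, h2⟩ rfl
  have h4 := score_pass σ' x ⟨_, h2⟩ (by simp; omega)
  rw [h ⟨_, h2⟩ le_rfl] at h4
  exact h3 h4

theorem Hist_congr {n : ℕ} (g : List ℕ → Fin n → Bool) (σ σ' : Equiv.Perm (Fin n)) (t : ℕ)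
    (h : ∀ k < t, ∀ j : Fin n, (j : ℕ) ≤ S g k σ → X g k σ (σ' j) = X g k σ (σ j)) :
    ∀ k ≤ t, Hist g k σ' = Hist g k σ := by
  intro k
  induction k with
  | zero => intro _; rfl
  | succ k ih =>
    intro hk
    have e := ih (by omega)
    rw [Hist_succ, Hist_succ, e]
    congr 2
    unfold S X
    rw [e]
    exact score_congr σ σ' _ (h k (by omega))

theorem X_of_Hist {n : ℕ} (g : List ℕ → Fin n → Bool) (σ σ' : Equiv.Perm (Fin n)) (t : ℕ)
    (h : Hist g t σ' = Hist g t σ) : X g t σ' = X g t σ := by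
  unfold X; rw [h]

theorem S_of_Hist {n : ℕ} (g : List ℕ → Fin n → Bool) (σ σ' : Equiv.Perm (Fin n)) (t : ℕ)
    (h : Hist g (t+1) σ' = Hist g (t+1) σ) : S g t σ' = S g t σ := by
  rw [Hist_succ, Hist_succ] at h
  have := List.append_inj_right' h rfl
  simpa using this

theorem Hist_mono {n : ℕ} (g : List ℕ → Fin n → Bool) (σ σ' : Equiv.Perm (Fin n)) (t : ℕ)
    (h : Hist g t σ' = Hist g t σ) : ∀ k ≤ t, Hist g k σ' = Hist g k σ := by
  induction t with
  | zero => intro k hk; obtain rfl : k = 0 := by omega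
            exact h
  | succ t ih =>
    intro k hk
    rcases Nat.eq_or_lt_of_le hk with rfl | hk
    · exact h
    · rw [Hist_succ, Hist_succ] at h
      exact ih (List.append_inj_left' h rfl) k (by omega)

open Classical in
/-- candidates for `σ i` given the history and the prefix -/
noncomputable def U {n : ℕ} (g : List ℕ → Fin n → Bool) (i : Fin n) (t : ℕ)
    (σ : Equiv.Perm (Fin n)) : Finset (Fin n) :=
  univ.filter (fun v => (∀ j < i, σ j ≠ v) ∧
    ∀ k < t, (i : ℕ) ≤ S g k σ → X g k σ v = X g k σ (σ i))

theorem mem_U {n : ℕ} (g : List ℕ → Fin n → Bool) (i : Fin n) (t : ℕ)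
    (σ : Equiv.Perm (Fin n)) (v : Fin n) : v ∈ U g i t σ ↔ (∀ j < i, σ j ≠ v) ∧
    ∀ k < t, (i : ℕ) ≤ S g k σ → X g k σ v = X g k σ (σ i) := by
  classical
  simp [U]

theorem self_mem_U {n : ℕ} (g : List ℕ → Fin n → Bool) (i : Fin n) (t : ℕ)
    (σ : Equiv.Perm (Fin n)) : σ i ∈ U g i t σ := by
  rw [mem_U]
  refine ⟨fun j hj h => ?_, fun _ _ _ => rfl⟩
  exact hj.ne (σ.injective h)

/-- resample position i to u -/
def rs {n : ℕ} (i : Fin n) (σ : Equiv.Perm (Fin n)) (u : Fin n) : Equiv.Perm (Fin n) :=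
  σ.trans (Equiv.swap (σ i) u)

theorem rs_apply_self {n : ℕ} (i : Fin n) (σ : Equiv.Perm (Fin n)) (u : Fin n) :
    rs i σ u i = u := by simp [rs]

theorem rs_rs {n : ℕ} (i : Fin n) (σ : Equiv.Perm (Fin n)) (u : Fin n) :
    rs i (rs i σ u) (σ i) = σ := by
  ext j
  simp [rs, Equiv.swap_comm u (σ i)]

theorem rs_lt {n : ℕ} {g : List ℕ → Fin n → Bool} {i : Fin n} {t : ℕ}
    {σ : Equiv.Perm (Fin n)} {u : Fin n} (hu : u ∈ U g i t σ) (j : Fin n) (hj : j < i) :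
    rs i σ u j = σ j := by
  rw [mem_U] at hu
  simp only [rs, Equiv.trans_apply]
  apply Equiv.swap_apply_of_ne_of_ne
  · intro h; exact hj.ne (σ.injective h)
  · exact hu.1 j hj

theorem rs_hist {n : ℕ} {g : List ℕ → Fin n → Bool} {i : Fin n} {t : ℕ}
    {σ : Equiv.Perm (Fin n)} {u : Fin n} (hu : u ∈ U g i t σ) :
    ∀ k ≤ t, Hist g k (rs i σ u) = Hist g k σ := by
  apply Hist_congr
  intro k hk j hj
  by_cases hi : (i : ℕ) ≤ S g k σ
  · have h1 := ((mem_U g i t σ u).1 hu).2 k hk hi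
    simp only [rs, Equiv.trans_apply]
    by_cases e1 : σ j = σ i
    · rw [e1, Equiv.swap_apply_left]; exact h1
    · by_cases e2 : σ j = u
      · rw [e2, Equiv.swap_apply_right]; exact h1.symm
      · rw [Equiv.swap_apply_of_ne_of_ne e1 e2]
  · rw [rs_lt hu j (by rw [Fin.lt_def]; omega)]

theorem rs_X {n : ℕ} {g : List ℕ → Fin n → Bool} {i : Fin n} {t : ℕ}
    {σ : Equiv.Perm (Fin n)} {u : Fin n} (hu : u ∈ U g i t σ) (k : ℕ) (hk : k ≤ t) :
    X g k (rs i σ u) = X g k σ := X_of_Hist _ _ _ _ (rs_hist hu k hk)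

theorem rs_S {n : ℕ} {g : List ℕ → Fin n → Bool} {i : Fin n} {t : ℕ}
    {σ : Equiv.Perm (Fin n)} {u : Fin n} (hu : u ∈ U g i t σ) (k : ℕ) (hk : k < t) :
    S g k (rs i σ u) = S g k σ := S_of_Hist _ _ _ _ (rs_hist hu (k+1) hk)

theorem rs_U {n : ℕ} {g : List ℕ → Fin n → Bool} {i : Fin n} {t : ℕ}
    {σ : Equiv.Perm (Fin n)} {u : Fin n} (hu : u ∈ U g i t σ) :
    U g i t (rs i σ u) = U g i t σ := by
  ext v
  rw [mem_U, mem_U, rs_apply_self]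
  apply and_congr
  · apply forall₂_congr
    intro j hj
    rw [rs_lt hu j hj]
  · apply forall₂_congr
    intro k hk
    rw [rs_S hu k hk, rs_X hu k hk.le]
    apply forall_congr'
    intro h
    rw [((mem_U g i t σ u).1 hu).2 k hk h]

/-- i was never reached -/
def fresh {n : ℕ} (g : List ℕ → Fin n → Bool) (i : Fin n) (t : ℕ)
    (σ : Equiv.Perm (Fin n)) : Prop := ∀ k < t, S g k σ < (i : ℕ)

/-- the first query reaching i failed there -/
def hard {n : ℕ} (g : List ℕ → Fin n → Bool) (i : Fin n) (t : ℕ)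
    (σ : Equiv.Perm (Fin n)) : Prop := ∃ k < t, S g k σ = (i : ℕ) ∧ fresh g i k σ

/-- not identified -/
def alive {n : ℕ} (g : List ℕ → Fin n → Bool) (t : ℕ)
    (σ : Equiv.Perm (Fin n)) : Prop := ∃ σ', σ' ≠ σ ∧ Hist g t σ' = Hist g t σ

theorem rs_fresh {n : ℕ} {g : List ℕ → Fin n → Bool} {i : Fin n} {t : ℕ}
    {σ : Equiv.Perm (Fin n)} {u : Fin n} (hu : u ∈ U g i t σ) :
    fresh g i t (rs i σ u) ↔ fresh g i t σ := by
  unfold fresh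
  apply forall₂_congr
  intro k hk
  rw [rs_S hu k hk]

theorem rs_hard {n : ℕ} {g : List ℕ → Fin n → Bool} {i : Fin n} {t : ℕ}
    {σ : Equiv.Perm (Fin n)} {u : Fin n} (hu : u ∈ U g i t σ) :
    hard g i t (rs i σ u) ↔ hard g i t σ := by
  unfold hard fresh
  apply exists_congr
  intro k
  apply and_congr_right
  intro hk
  rw [rs_S hu k hk]
  apply and_congr_right
  intro _
  apply forall₂_congr
  intro k' hk'
  rw [rs_S hu k' (by omega)]

theorem rs_alive {n : ℕ} {g : List ℕ → Fin n → Bool} {i : Fin n} {t : ℕ}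
    {σ : Equiv.Perm (Fin n)} {u : Fin n} (hu : u ∈ U g i t σ) (h : alive g t σ) :
    alive g t (rs i σ u) := by
  by_cases e : rs i σ u = σ
  · rwa [e]
  · exact ⟨σ, fun h => e h.symm, (rs_hist hu t le_rfl).symm⟩

theorem rs_S_le {n : ℕ} {g : List ℕ → Fin n → Bool} {i : Fin n} {t : ℕ}
    {σ : Equiv.Perm (Fin n)} {u : Fin n} (hu : u ∈ U g i t σ) :
    (i : ℕ) ≤ S g t (rs i σ u) ↔ (i : ℕ) ≤ S g t σ := by
  unfold S
  rw [le_score _ _ _ i.2.le, le_score _ _ _ i.2.le, rs_X hu t le_rfl]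
  apply forall₂_congr
  intro j hj
  rw [rs_lt hu j hj]

theorem not_alive_U {n : ℕ} {g : List ℕ → Fin n → Bool} {i : Fin n} {t : ℕ}
    {σ : Equiv.Perm (Fin n)} (h : ¬ alive g t σ) : U g i t σ = {σ i} := by
  apply Finset.eq_singleton_iff_unique_mem.2
  refine ⟨self_mem_U g i t σ, fun u hu => ?_⟩
  by_contra hne
  apply h
  refine ⟨rs i σ u, fun e => hne ?_, rs_hist hu t le_rfl⟩
  rw [← rs_apply_self i σ u, e]

theorem alive_anti {n : ℕ} {g : List ℕ → Fin n → Bool} {s t : ℕ} (hst : s ≤ t)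
    {σ : Equiv.Perm (Fin n)} (h : alive g t σ) : alive g s σ := by
  obtain ⟨σ', h1, h2⟩ := h
  exact ⟨σ', h1, Hist_mono g σ σ' t h2 s hst⟩

theorem fresh_card {n : ℕ} {g : List ℕ → Fin n → Bool} {i : Fin n} {t : ℕ}
    {σ : Equiv.Perm (Fin n)} (h : fresh g i t σ) : (U g i t σ).card = n - i := by
  have : U g i t σ = (Finset.Ici i).map σ.toEmbedding := by
    ext v
    rw [mem_U]
    simp only [Finset.mem_map, Finset.mem_Ici, Equiv.coe_toEmbedding]
    constructor
    · rintro ⟨h1, -⟩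
      refine ⟨σ.symm v, ?_, by simp⟩
      by_contra hlt
      exact h1 (σ.symm v) (not_le.1 hlt) (by simp)
    · rintro ⟨j, hj, rfl⟩
      refine ⟨fun k hk e => ?_, fun k hk hle => ?_⟩
      · have := σ.injective e
        subst this
        exact absurd hj (not_le.2 hk)
      · have := h k hk; omega
  rw [this, Finset.card_map, Fin.card_Ici]

theorem resample {n : ℕ} (g : List ℕ → Fin n → Bool) (i : Fin n) (t : ℕ)
    (G : Equiv.Perm (Fin n) → ℝ) (h : ∀ σ, ∑ u ∈ U g i t σ, G (rs i σ u) ≤ 0) :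
    ∑ σ, G σ ≤ 0 := by
  have hc : ∀ σ, (0:ℝ) < (U g i t σ).card := fun σ => by
    exact_mod_cast Finset.card_pos.2 ⟨_, self_mem_U g i t σ⟩
  have key : ∑ σ, G σ = ∑ σ, ((U g i t σ).card : ℝ)⁻¹ * ∑ u ∈ U g i t σ, G (rs i σ u) := by
    have e1 : ∑ σ, G σ = ∑ p ∈ (univ : Finset (Equiv.Perm (Fin n))).sigma (fun σ => U g i t σ),
        ((U g i t p.1).card : ℝ)⁻¹ * G p.1 := by
      rw [Finset.sum_sigma]
      apply Finset.sum_congr rfl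
      intro σ _
      simp only [Finset.sum_const, nsmul_eq_mul]
      rw [← mul_assoc, mul_inv_cancel₀ (hc σ).ne', one_mul]
    have e2 : ∑ σ, ((U g i t σ).card : ℝ)⁻¹ * ∑ u ∈ U g i t σ, G (rs i σ u) =
        ∑ p ∈ (univ : Finset (Equiv.Perm (Fin n))).sigma (fun σ => U g i t σ),
        ((U g i t p.1).card : ℝ)⁻¹ * G (rs i p.1 p.2) := by
      rw [Finset.sum_sigma]
      apply Finset.sum_congr rfl
      intro σ _
      rw [Finset.mul_sum]
    rw [e1, e2]
    have step : ∀ p ∈ (univ : Finset (Equiv.Perm (Fin n))).sigma (fun σ => U g i t σ),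
        (⟨rs i p.1 p.2, p.1 i⟩ : Σ _ : Equiv.Perm (Fin n), Fin n) ∈
        (univ : Finset (Equiv.Perm (Fin n))).sigma (fun σ => U g i t σ) := by
      rintro ⟨σ, u⟩ hp
      simp only [Finset.mem_sigma, Finset.mem_univ, true_and] at hp ⊢
      rw [rs_U hp]; exact self_mem_U g i t σ
    have inv : ∀ p ∈ (univ : Finset (Equiv.Perm (Fin n))).sigma (fun σ => U g i t σ),
        (⟨rs i (rs i p.1 p.2) (p.1 i), rs i p.1 p.2 i⟩ : Σ _ : Equiv.Perm (Fin n), Fin n) = p := by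
      rintro ⟨σ, u⟩ hp
      simp only [rs_rs, rs_apply_self]
    refine Finset.sum_bij' (fun p _ => ⟨rs i p.1 p.2, p.1 i⟩) (fun p _ => ⟨rs i p.1 p.2, p.1 i⟩)
      step step inv inv ?_
    rintro ⟨σ, u⟩ hp
    simp only [Finset.mem_sigma, Finset.mem_univ, true_and] at hp
    simp only [rs_rs, rs_U hp]
  rw [key]
  apply Finset.sum_nonpos
  intro σ _
  exact mul_nonpos_of_nonneg_of_nonpos (inv_nonneg.2 (hc σ).le) (h σ)

/-- the potential of one candidate set size -/
noncomputable def ell (n m : ℕ) : ℝ := Real.log (1 + Real.log ((n : ℝ) / m))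

theorem ell_fresh (n d : ℕ) (hd : d ≤ n) : (d : ℝ) * ell n d ≤ n := by
  rcases Nat.eq_zero_or_pos d with rfl | hd0
  · simp
  have h0 : (0:ℝ) < d := by exact_mod_cast hd0
  have h1 : (1:ℝ) ≤ n / d := by
    rw [le_div_iff₀ h0]; simpa using (by exact_mod_cast hd : (d:ℝ) ≤ n)
  have h2 : 0 ≤ Real.log ((n:ℝ)/d) := Real.log_nonneg h1
  have h3 : Real.log ((n:ℝ)/d) ≤ n/d - 1 := Real.log_le_sub_one_of_pos (by linarith)
  have h4 : ell n d ≤ Real.log ((n:ℝ)/d) := by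
    have := Real.log_le_sub_one_of_pos (x := 1 + Real.log ((n:ℝ)/d)) (by linarith)
    unfold ell; linarith
  calc (d:ℝ) * ell n d ≤ d * (n/d) := by
        apply mul_le_mul_of_nonneg_left _ h0.le; linarith
    _ = n := by field_simp

theorem ell_diff (n m a : ℕ) (ha : 0 < a) (ham : a ≤ m) (hm : m ≤ n) :
    ell n a - ell n m ≤ Real.log ((m:ℝ)/a) / (1 + Real.log ((n:ℝ)/m)) := by
  have h0 : (0:ℝ) < a := by exact_mod_cast ha
  have h0m : (0:ℝ) < m := by exact_mod_cast (lt_of_lt_of_le ha ham)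
  have h0n : (0:ℝ) < n := by exact_mod_cast (lt_of_lt_of_le ha (ham.trans hm))
  have h1 : (1:ℝ) ≤ n / m := by
    rw [le_div_iff₀ h0m]; simpa using (by exact_mod_cast hm : (m:ℝ) ≤ n)
  have h1' : (1:ℝ) ≤ m / a := by
    rw [le_div_iff₀ h0]; simpa using (by exact_mod_cast ham : (a:ℝ) ≤ m)
  have h2 := Real.log_nonneg h1
  have h2' := Real.log_nonneg h1'
  have e : Real.log ((n:ℝ)/a) = Real.log ((n:ℝ)/m) + Real.log ((m:ℝ)/a) := by
    rw [← Real.log_mul (by positivity) (by positivity)]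
    congr 1; field_simp
  unfold ell
  rw [e, ← Real.log_div (by linarith) (by linarith)]
  have := Real.log_le_sub_one_of_pos (x := (1 + (Real.log ((n:ℝ)/m) + Real.log ((m:ℝ)/a))) / (1 + Real.log ((n:ℝ)/m)))
    (by apply div_pos <;> linarith)
  refine this.trans (le_of_eq ?_)
  have : 1 + Real.log ((n:ℝ)/m) ≠ 0 := by linarith
  field_simp
  ring

theorem ell_hard (n m a d : ℕ) (hmad : a + d = m) (hm0 : 0 < m) (hm : m ≤ n) :
    (a:ℝ) * (ell n a - ell n m) + d * (ell n d - ell n m) ≤ 2 * d + (m:ℝ) * (m / n) := by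
  have h0m : (0:ℝ) < m := by exact_mod_cast hm0
  have h0n : (0:ℝ) < n := by exact_mod_cast (lt_of_lt_of_le hm0 hm)
  have h1 : (1:ℝ) ≤ n / m := by
    rw [le_div_iff₀ h0m]; simpa using (by exact_mod_cast hm : (m:ℝ) ≤ n)
  have h2 := Real.log_nonneg h1
  have hcast : (a:ℝ) + d = m := by exact_mod_cast hmad
  have A : (a:ℝ) * (ell n a - ell n m) ≤ d := by
    rcases Nat.eq_zero_or_pos a with rfl | ha
    · simp
    have h0 : (0:ℝ) < a := by exact_mod_cast ha
    have h3 := ell_diff n m a ha (by omega) hm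
    have h1' : (1:ℝ) ≤ m / a := by
      rw [le_div_iff₀ h0]; have : (0:ℝ) ≤ d := by positivity
      linarith
    have h4 : Real.log ((m:ℝ)/a) / (1 + Real.log ((n:ℝ)/m)) ≤ Real.log ((m:ℝ)/a) :=
      div_le_self (Real.log_nonneg h1') (by linarith)
    have h5 := Real.log_le_sub_one_of_pos (x := (m:ℝ)/a) (by positivity)
    calc (a:ℝ) * (ell n a - ell n m) ≤ a * (m/a - 1) := by
          apply mul_le_mul_of_nonneg_left _ h0.le; linarith
      _ = d := by rw [← hcast]; field_simp; ring
  have B : (d:ℝ) * (ell n d - ell n m) ≤ d + m * (m/n) := by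
    rcases Nat.eq_zero_or_pos d with rfl | hd
    · simp; positivity
    have h0 : (0:ℝ) < d := by exact_mod_cast hd
    have h3 := ell_diff n m d hd (by omega) hm
    have e : Real.log ((m:ℝ)/d) = Real.log ((n:ℝ)/m) + Real.log ((m:ℝ) * (m/n) / d) := by
      rw [← Real.log_mul (by positivity) (by positivity)]
      congr 1; field_simp
    have hy : (0:ℝ) < (m:ℝ) * (m/n) / d := by positivity
    have h5 := Real.log_le_sub_one_of_pos hy
    have h4 : Real.log ((m:ℝ)/d) / (1 + Real.log ((n:ℝ)/m)) ≤ 1 + (m:ℝ) * (m/n) / d := by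
      rw [div_le_iff₀ (by linarith), e]
      nlinarith [mul_nonneg hy.le h2]
    calc (d:ℝ) * (ell n d - ell n m) ≤ d * (1 + (m:ℝ) * (m/n) / d) := by
          apply mul_le_mul_of_nonneg_left _ h0.le; linarith
      _ = _ := by field_simp
  linarith

theorem U_succ_lt {n : ℕ} {g : List ℕ → Fin n → Bool} {i : Fin n} {t : ℕ}
    {σ : Equiv.Perm (Fin n)} (h : S g t σ < (i : ℕ)) : U g i (t+1) σ = U g i t σ := by
  ext v
  rw [mem_U, mem_U]
  apply and_congr_right
  intro _
  constructor
  · intro H k hk; exact H k (by omega)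
  · intro H k hk hle
    rcases Nat.lt_succ_iff_lt_or_eq.1 hk with h1 | rfl
    · exact H k h1 hle
    · omega

theorem U_succ_le {n : ℕ} {g : List ℕ → Fin n → Bool} {i : Fin n} {t : ℕ}
    {σ : Equiv.Perm (Fin n)} (h : (i : ℕ) ≤ S g t σ) :
    U g i (t+1) σ = (U g i t σ).filter (fun v => X g t σ v = X g t σ (σ i)) := by
  ext v
  rw [Finset.mem_filter, mem_U, mem_U, and_assoc]
  apply and_congr_right
  intro _
  constructor
  · intro H; exact ⟨fun k hk => H k (by omega), H t (by omega) h⟩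
  · rintro ⟨H, H'⟩ k hk hle
    rcases Nat.lt_succ_iff_lt_or_eq.1 hk with h1 | rfl
    · exact H k h1 hle
    · exact H'

theorem hard_succ_iff {n : ℕ} {g : List ℕ → Fin n → Bool} {i : Fin n} {t : ℕ}
    {σ : Equiv.Perm (Fin n)} :
    hard g i (t+1) σ ↔ hard g i t σ ∨ (S g t σ = (i:ℕ) ∧ fresh g i t σ) := by
  unfold hard
  constructor
  · rintro ⟨k, hk, h⟩
    rcases Nat.lt_succ_iff_lt_or_eq.1 hk with h1 | rfl
    · exact Or.inl ⟨k, h1, h⟩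
    · exact Or.inr h
  · rintro (⟨k, hk, h⟩ | h)
    · exact ⟨k, by omega, h⟩
    · exact ⟨t, by omega, h⟩

theorem hard_not_fresh {n : ℕ} {g : List ℕ → Fin n → Bool} {i : Fin n} {t : ℕ}
    {σ : Equiv.Perm (Fin n)} (h : hard g i t σ) : ¬ fresh g i t σ := by
  obtain ⟨k, hk, h1, _⟩ := h
  intro hf
  have := hf k hk
  omega

open Classical in
/-- potential of position i -/
noncomputable def Phi {n : ℕ} (g : List ℕ → Fin n → Bool) (i : Fin n) (t : ℕ)
    (σ : Equiv.Perm (Fin n)) : ℝ := if hard g i t σ then ell n (U g i t σ).card else 0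

open Classical in
/-- bound for the increase of the potential -/
noncomputable def FF {n : ℕ} (g : List ℕ → Fin n → Bool) (i : Fin n) (t : ℕ)
    (σ : Equiv.Perm (Fin n)) : ℝ :=
  (if alive g t σ then 2 * (if S g t σ = (i:ℕ) then (1:ℝ) else 0) +
    (if hard g i t σ then ((U g i t σ).card : ℝ) / n else 0) else 0) +
  2 * (if fresh g i t σ ∧ (i:ℕ) ≤ S g t σ then (1:ℝ) else 0)

theorem FF_nonneg {n : ℕ} (g : List ℕ → Fin n → Bool) (i : Fin n) (t : ℕ)
    (σ : Equiv.Perm (Fin n)) : 0 ≤ FF g i t σ := by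
  unfold FF
  split_ifs <;> positivity

theorem gain_pointwise {n : ℕ} (g : List ℕ → Fin n → Bool) (i : Fin n) (hi : 2 * (i:ℕ) ≤ n)
    (t : ℕ) (σ : Equiv.Perm (Fin n)) :
    ∑ u ∈ U g i t σ, (Phi g i (t+1) (rs i σ u) - Phi g i t (rs i σ u) - FF g i t (rs i σ u)) ≤ 0 := by
  classical
  by_cases hs : (i:ℕ) ≤ S g t σ
  swap
  · apply Finset.sum_nonpos
    intro u hu
    have h1 : S g t (rs i σ u) < (i:ℕ) := by
      rw [← not_le, rs_S_le hu]; exact hs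
    have : Phi g i (t+1) (rs i σ u) = Phi g i t (rs i σ u) := by
      unfold Phi
      rw [U_succ_lt h1]
      congr 1
      rw [hard_succ_iff]
      simp [h1.ne]
    rw [this]
    have := FF_nonneg g i t (rs i σ u)
    linarith
  -- main case
  set V := U g i t σ with hV
  have hV0 : 0 < V.card := Finset.card_pos.2 ⟨_, self_mem_U g i t σ⟩
  have hVn : V.card ≤ n := by simpa using Finset.card_le_univ V
  set x := X g t σ with hx
  set VA := V.filter (fun v => x v = bit i) with hVA
  set VD := V.filter (fun v => ¬ x v = bit i) with hVD
  have hcard : VA.card + VD.card = V.card := Finset.card_filter_add_card_filter_not _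
  have hSle : ∀ u ∈ V, (i:ℕ) ≤ S g t (rs i σ u) := fun u hu => (rs_S_le hu).2 hs
  have hSeq : ∀ u ∈ V, (S g t (rs i σ u) = (i:ℕ) ↔ ¬ x u = bit i) := by
    intro u hu
    constructor
    · intro h
      have := score_fail _ _ _ h
      rwa [rs_apply_self, rs_X hu t le_rfl] at this
    · intro h
      apply score_eq _ _ _ (hSle u hu)
      rw [rs_apply_self, rs_X hu t le_rfl]; exact h
  have hU1 : ∀ u ∈ V, U g i (t+1) (rs i σ u) = if x u = bit i then VA else VD := by
    intro u hu
    rw [U_succ_le (hSle u hu), rs_U hu, rs_X hu t le_rfl, rs_apply_self]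
    split_ifs with h
    · rw [hVA, ← h]
    · rw [hVD]
      apply Finset.filter_congr
      intro v _
      show x v = x u ↔ _
      revert h
      cases x u <;> cases x v <;> cases bit i <;> simp
  have split : ∀ f : Fin n → ℝ, ∑ u ∈ V, f u = ∑ u ∈ VA, f u + ∑ u ∈ VD, f u := fun f =>
    (Finset.sum_filter_add_sum_filter_not V _ f).symm
  by_cases hh : hard g i t σ
  · -- hard
    have hnf : ¬ fresh g i t σ := hard_not_fresh hh
    have hP : ∀ u ∈ V, Phi g i (t+1) (rs i σ u) - Phi g i t (rs i σ u) =
        ell n (if x u = bit i then VA else VD).card - ell n V.card := by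
      intro u hu
      unfold Phi
      rw [if_pos (hard_succ_iff.2 (Or.inl ((rs_hard hu).2 hh))), if_pos ((rs_hard hu).2 hh),
        hU1 u hu, rs_U hu]
    by_cases ha : alive g t σ
    · have hF : ∀ u ∈ V, FF g i t (rs i σ u) = (if x u = bit i then 0 else 2) + (V.card:ℝ) / n := by
        intro u hu
        unfold FF
        rw [if_pos (rs_alive hu ha), if_pos ((rs_hard hu).2 hh), rs_U hu,
          if_neg (c := fresh g i t (rs i σ u) ∧ _) (fun h => hnf ((rs_fresh hu).1 h.1)), ← hV]
        by_cases h : x u = bit i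
        · rw [if_neg (fun h' => (hSeq u hu).1 h' h), if_pos h]; ring
        · rw [if_pos ((hSeq u hu).2 h), if_neg h]; ring
      have e : ∑ u ∈ V, (Phi g i (t+1) (rs i σ u) - Phi g i t (rs i σ u) - FF g i t (rs i σ u))
          = ∑ u ∈ V, (ell n (if x u = bit i then VA else VD).card - ell n V.card -
            ((if x u = bit i then 0 else 2) + (V.card:ℝ) / n)) := by
        apply Finset.sum_congr rfl
        intro u hu
        rw [hP u hu, hF u hu]
      rw [e, split]
      have eA : ∑ u ∈ VA, (ell n (if x u = bit i then VA else VD).card - ell n V.card -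
            ((if x u = bit i then 0 else 2) + (V.card:ℝ) / n)) =
            VA.card * (ell n VA.card - ell n V.card - (V.card:ℝ)/n) := by
        rw [← nsmul_eq_mul, ← Finset.sum_const]
        apply Finset.sum_congr rfl
        intro u hu
        have h := (Finset.mem_filter.1 hu).2
        rw [if_pos h, if_pos h]; ring
      have eD : ∑ u ∈ VD, (ell n (if x u = bit i then VA else VD).card - ell n V.card -
            ((if x u = bit i then 0 else 2) + (V.card:ℝ) / n)) =
            VD.card * (ell n VD.card - ell n V.card - 2 - (V.card:ℝ)/n) := by
        rw [← nsmul_eq_mul, ← Finset.sum_const]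
        apply Finset.sum_congr rfl
        intro u hu
        have h := (Finset.mem_filter.1 hu).2
        rw [if_neg h, if_neg h]; ring
      rw [eA, eD]
      have key := ell_hard n V.card VA.card VD.card hcard hV0 hVn
      have hc : (VA.card:ℝ) + VD.card = V.card := by exact_mod_cast hcard
      have : (V.card:ℝ) * (V.card / n) = VA.card * ((V.card:ℝ)/n) + VD.card * ((V.card:ℝ)/n) := by
        rw [← add_mul, hc]
      linarith
    · have hs1 : V = {σ i} := not_alive_U ha
      apply Finset.sum_nonpos
      intro u hu
      have hcase : (if x u = bit i then VA else VD) = V := by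
        have hu' : u = σ i := by rw [hs1] at hu; simpa using hu
        split_ifs with h
        · rw [hVA, Finset.filter_eq_self]
          intro v hv
          have : v = u := by rw [hs1] at hv; rw [hu']; simpa using hv
          rw [this]; exact h
        · rw [hVD, Finset.filter_eq_self]
          intro v hv
          have : v = u := by rw [hs1] at hv; rw [hu']; simpa using hv
          rw [this]; exact h
      rw [hP u hu, hcase]
      have := FF_nonneg g i t (rs i σ u)
      linarith
  · by_cases hf : fresh g i t σ
    · have hP : ∀ u ∈ V, Phi g i (t+1) (rs i σ u) - Phi g i t (rs i σ u) =
          if x u = bit i then 0 else ell n VD.card := by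
        intro u hu
        unfold Phi
        rw [if_neg (fun h => hh ((rs_hard hu).1 h)), hU1 u hu]
        by_cases h : x u = bit i
        · rw [if_pos h, if_pos h, if_neg]
          · ring
          · rw [hard_succ_iff]
            rintro (h' | h')
            · exact hh ((rs_hard hu).1 h')
            · exact (hSeq u hu).1 h'.1 h
        · rw [if_neg h, if_neg h, if_pos]
          · ring
          · exact hard_succ_iff.2 (Or.inr ⟨(hSeq u hu).2 h, (rs_fresh hu).2 hf⟩)
      have hF : ∀ u ∈ V, 2 ≤ FF g i t (rs i σ u) := by
        intro u hu
        unfold FF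
        rw [if_pos (c := fresh g i t (rs i σ u) ∧ _) ⟨(rs_fresh hu).2 hf, hSle u hu⟩]
        have : (0:ℝ) ≤ (if alive g t (rs i σ u) then
          2 * (if S g t (rs i σ u) = (i:ℕ) then (1:ℝ) else 0) +
          (if hard g i t (rs i σ u) then ((U g i t (rs i σ u)).card : ℝ) / n else 0) else 0) := by
          split_ifs <;> positivity
        linarith
      have e : ∑ u ∈ V, (Phi g i (t+1) (rs i σ u) - Phi g i t (rs i σ u) - FF g i t (rs i σ u))
          ≤ ∑ u ∈ V, ((if x u = bit i then 0 else ell n VD.card) - 2) := by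
        apply Finset.sum_le_sum
        intro u hu
        rw [hP u hu]
        have := hF u hu
        linarith
      refine e.trans ?_
      rw [Finset.sum_sub_distrib, split]
      have eA : ∑ u ∈ VA, (if x u = bit i then 0 else ell n VD.card) = 0 := by
        apply Finset.sum_eq_zero
        intro u hu
        rw [if_pos (Finset.mem_filter.1 hu).2]
      have eD : ∑ u ∈ VD, (if x u = bit i then 0 else ell n VD.card) = VD.card * ell n VD.card := by
        rw [← nsmul_eq_mul, ← Finset.sum_const]
        apply Finset.sum_congr rfl
        intro u hu
        rw [if_neg (Finset.mem_filter.1 hu).2]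
      rw [eA, eD, Finset.sum_const, nsmul_eq_mul]
      have k1 := ell_fresh n VD.card (by omega)
      have k2 : (n:ℝ) ≤ 2 * V.card := by
        have := fresh_card hf
        rw [← hV] at this
        exact_mod_cast (by omega : n ≤ 2 * V.card)
      linarith
    · apply Finset.sum_nonpos
      intro u hu
      have h1 : ¬ hard g i (t+1) (rs i σ u) := by
        rw [hard_succ_iff]
        rintro (h' | h')
        · exact hh ((rs_hard hu).1 h')
        · exact hf ((rs_fresh hu).1 h'.2)
      have h2 : ¬ hard g i t (rs i σ u) := fun h' => hh ((rs_hard hu).1 h')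
      unfold Phi
      rw [if_neg h1, if_neg h2]
      have := FF_nonneg g i t (rs i σ u)
      linarith

theorem gain_sum {n : ℕ} (g : List ℕ → Fin n → Bool) (i : Fin n) (hi : 2 * (i:ℕ) ≤ n) (t : ℕ) :
    ∑ σ, Phi g i (t+1) σ ≤ ∑ σ, Phi g i t σ + ∑ σ, FF g i t σ := by
  have := resample g i t (fun σ => Phi g i (t+1) σ - Phi g i t σ - FF g i t σ)
    (gain_pointwise g i hi t)
  rw [Finset.sum_sub_distrib, Finset.sum_sub_distrib] at this
  linarith

theorem hard_disjoint {n : ℕ} {g : List ℕ → Fin n → Bool} {i j : Fin n} {t : ℕ}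
    {σ : Equiv.Perm (Fin n)} (hij : i < j) (hb : bit i = bit j) (hj : hard g j t σ) :
    Disjoint (U g i t σ) (U g j t σ) := by
  rw [Finset.disjoint_left]
  intro v hv hv'
  rw [mem_U] at hv hv'
  obtain ⟨k, hk, hS, -⟩ := hj
  have h1 := hv.2 k hk (by rw [hS]; exact hij.le)
  have h2 := hv'.2 k hk hS.ge
  have h3 := score_pass σ (X g k σ) i (by show _ < S g k σ; rw [hS]; exact hij)
  have h4 := score_fail σ (X g k σ) j hS
  rw [← h2, h1, h3] at h4
  exact h4 hb

open Classical in
theorem hard_sum_parity {n : ℕ} (g : List ℕ → Fin n → Bool) (t : ℕ)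
    (σ : Equiv.Perm (Fin n)) (b : Bool) :
    ∑ i ∈ univ.filter (fun i : Fin n => hard g i t σ ∧ bit i = b), (U g i t σ).card ≤ n := by
  rw [← Finset.card_biUnion]
  · exact (Finset.card_le_univ _).trans (by simp)
  · intro i hi j hj hne
    simp only [Finset.coe_filter, Finset.mem_univ, true_and, Set.mem_ofPred_eq] at hi hj
    rcases lt_or_gt_of_ne hne with h | h
    · exact hard_disjoint h (hi.2.trans hj.2.symm) hj.1
    · exact (hard_disjoint h (hj.2.trans hi.2.symm) hi.1).symm

open Classical in
theorem hard_sum {n : ℕ} (g : List ℕ → Fin n → Bool) (t : ℕ)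
    (σ : Equiv.Perm (Fin n)) :
    ∑ i : Fin n, (if hard g i t σ then ((U g i t σ).card : ℝ) / n else 0) ≤ 2 := by
  have h1 := hard_sum_parity g t σ true
  have h2 := hard_sum_parity g t σ false
  have e : ∑ i ∈ univ.filter (fun i : Fin n => hard g i t σ), (U g i t σ).card =
     ∑ i ∈ univ.filter (fun i : Fin n => hard g i t σ ∧ bit i = true), (U g i t σ).card +
     ∑ i ∈ univ.filter (fun i : Fin n => hard g i t σ ∧ bit i = false), (U g i t σ).card := by
    rw [← Finset.sum_filter_add_sum_filter_not (univ.filter (fun i : Fin n => hard g i t σ))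
      (fun i : Fin n => bit i = true), Finset.filter_filter, Finset.filter_filter]
    simp only [Bool.not_eq_true]
  have h3 : ∑ i ∈ univ.filter (fun i : Fin n => hard g i t σ), (U g i t σ).card ≤ 2 * n := by omega
  rw [← Finset.sum_filter, ← Finset.sum_div, ← Nat.cast_sum]
  apply div_le_of_le_mul₀ (by positivity) (by norm_num)
  exact_mod_cast h3

/-- the positions that are paired -/
def idx (n : ℕ) (p : Fin (n/4) × Fin 2) : Fin n :=
  ⟨2 * (p.1 : ℕ) + (p.2 : ℕ), by have := p.1.2; have := p.2.2; omega⟩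

theorem idx_inj (n : ℕ) : Function.Injective (idx n) := by
  rintro ⟨a, b⟩ ⟨c, d⟩ h
  simp only [idx, Fin.mk.injEq] at h
  have := b.2
  have := d.2
  ext
  · simp only; omega
  · simp only; omega

/-- the set of positions used -/
def I (n : ℕ) : Finset (Fin n) := univ.map ⟨idx n, idx_inj n⟩

theorem I_mem {n : ℕ} {i : Fin n} (h : i ∈ I n) : 2 * (i:ℕ) ≤ n := by
  simp only [I, Finset.mem_map, Finset.mem_univ, true_and, Function.Embedding.coeFn_mk] at h
  obtain ⟨⟨a, b⟩, rfl⟩ := h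
  simp only [idx]
  have := a.2
  have := b.2
  omega

theorem I_card (n : ℕ) : (I n).card = 2 * (n/4) := by
  simp [I, mul_comm]

theorem I_sum (n : ℕ) (f : Fin n → ℝ) :
    ∑ i ∈ I n, f i = ∑ a : Fin (n/4), (f (idx n (a, 0)) + f (idx n (a, 1))) := by
  rw [I, Finset.sum_map, Fintype.sum_prod_type]
  simp

open Classical in
theorem FF_total {n : ℕ} (g : List ℕ → Fin n → Bool) (t : ℕ) (σ : Equiv.Perm (Fin n)) :
    ∑ i ∈ I n, FF g i t σ ≤ 4 * (if alive g t σ then (1:ℝ) else 0) +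
      2 * ∑ i ∈ I n, (if fresh g i t σ ∧ (i:ℕ) ≤ S g t σ then (1:ℝ) else 0) := by
  unfold FF
  rw [Finset.sum_add_distrib, ← Finset.mul_sum]
  gcongr
  by_cases ha : alive g t σ
  · simp only [if_pos ha]
    rw [Finset.sum_add_distrib, ← Finset.mul_sum]
    have h1 : ∑ i ∈ I n, (if S g t σ = (i:ℕ) then (1:ℝ) else 0) ≤ 1 := by
      rw [← Finset.sum_filter, Finset.sum_const, nsmul_eq_mul, mul_one]
      have : ((I n).filter (fun i : Fin n => S g t σ = (i:ℕ))).card ≤ 1 := by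
        rw [Finset.card_le_one]
        intro a ha b hb
        have h1 := (Finset.mem_filter.1 ha).2
        have h2 := (Finset.mem_filter.1 hb).2
        exact Fin.ext (h1.symm.trans h2)
      exact_mod_cast this
    have h2 : ∑ i ∈ I n, (if hard g i t σ then ((U g i t σ).card : ℝ) / n else 0) ≤ 2 := by
      refine le_trans ?_ (hard_sum g t σ)
      apply Finset.sum_le_sum_of_subset_of_nonneg (Finset.subset_univ _)
      intro i _ _
      split_ifs <;> positivity
    linarith
  · simp [ha]

open Classical in
theorem fresh_once {n : ℕ} (g : List ℕ → Fin n → Bool) (i : Fin n) (σ : Equiv.Perm (Fin n)) (N : ℕ) :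
    ∑ t ∈ range N, (if fresh g i t σ ∧ (i:ℕ) ≤ S g t σ then (1:ℝ) else 0) ≤ 1 := by
  rw [← Finset.sum_filter, Finset.sum_const, nsmul_eq_mul, mul_one]
  have : ((range N).filter (fun t => fresh g i t σ ∧ (i:ℕ) ≤ S g t σ)).card ≤ 1 := by
    rw [Finset.card_le_one]
    intro a ha b hb
    have h1 := (Finset.mem_filter.1 ha).2
    have h2 := (Finset.mem_filter.1 hb).2
    rcases lt_trichotomy a b with h | h | h
    · have := h2.1 a h; omega
    · exact h
    · have := h1.1 b h; omega
  exact_mod_cast this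

theorem Phi_zero {n : ℕ} (g : List ℕ → Fin n → Bool) (i : Fin n) (σ : Equiv.Perm (Fin n)) :
    Phi g i 0 σ = 0 := by
  unfold Phi
  rw [if_neg]
  rintro ⟨k, hk, -⟩
  omega

theorem Phi_le {n : ℕ} (g : List ℕ → Fin n → Bool) (i : Fin n) (hi : 2 * (i:ℕ) ≤ n) (N : ℕ) :
    ∑ σ, Phi g i N σ ≤ ∑ t ∈ range N, ∑ σ, FF g i t σ := by
  induction N with
  | zero => simp [Phi_zero]
  | succ N ih =>
    rw [Finset.sum_range_succ]
    have := gain_sum g i hi N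
    linarith

open Classical in
theorem upper {n : ℕ} (g : List ℕ → Fin n → Bool) (N : ℕ) :
    ∑ i ∈ I n, ∑ σ, Phi g i N σ ≤
      4 * ∑ σ, ∑ t ∈ range N, (if alive g t σ then (1:ℝ) else 0) +
      4 * (n/4 : ℕ) * Fintype.card (Equiv.Perm (Fin n)) := by
  calc ∑ i ∈ I n, ∑ σ, Phi g i N σ ≤ ∑ i ∈ I n, ∑ t ∈ range N, ∑ σ, FF g i t σ :=
        Finset.sum_le_sum (fun i hi => Phi_le g i (I_mem hi) N)
    _ = ∑ σ, ∑ t ∈ range N, ∑ i ∈ I n, FF g i t σ := by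
        have e1 : ∀ i ∈ I n, ∑ t ∈ range N, ∑ σ, FF g i t σ = ∑ σ, ∑ t ∈ range N, FF g i t σ :=
          fun i _ => Finset.sum_comm
        rw [Finset.sum_congr rfl e1, Finset.sum_comm]
        apply Finset.sum_congr rfl
        intro σ _
        exact Finset.sum_comm
    _ ≤ ∑ σ, ∑ t ∈ range N, (4 * (if alive g t σ then (1:ℝ) else 0) +
      2 * ∑ i ∈ I n, (if fresh g i t σ ∧ (i:ℕ) ≤ S g t σ then (1:ℝ) else 0)) :=
        Finset.sum_le_sum (fun σ _ => Finset.sum_le_sum (fun t _ => FF_total g t σ))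
    _ = 4 * ∑ σ, ∑ t ∈ range N, (if alive g t σ then (1:ℝ) else 0) +
        2 * ∑ σ, ∑ i ∈ I n, ∑ t ∈ range N,
          (if fresh g i t σ ∧ (i:ℕ) ≤ S g t σ then (1:ℝ) else 0) := by
        simp only [Finset.sum_add_distrib, ← Finset.mul_sum]
        congr 2
        apply Finset.sum_congr rfl
        intro σ _
        rw [Finset.sum_comm]
    _ ≤ 4 * ∑ σ, ∑ t ∈ range N, (if alive g t σ then (1:ℝ) else 0) +
        2 * ∑ σ : Equiv.Perm (Fin n), ∑ i ∈ I n, (1:ℝ) := by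
        gcongr with σ _ i _
        exact fresh_once g i σ N
    _ = _ := by
        simp only [Finset.sum_const, nsmul_eq_mul, I_card, Finset.card_univ]
        push_cast
        ring

theorem bit_succ (k : ℕ) : bit (k+1) ≠ bit k := by
  unfold bit
  rcases Nat.mod_two_eq_zero_or_one k with h | h
  · have : (k+1) % 2 = 1 := by omega
    simp [h, this]
  · have : (k+1) % 2 = 0 := by omega
    simp [h, this]

theorem swap_hard {n : ℕ} (g : List ℕ → Fin n → Bool) (N : ℕ) (i j : Fin n)
    (hij : (j:ℕ) = i + 1) (σ : Equiv.Perm (Fin n)) (hf : ¬ fresh g i N σ)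
    (h1 : ¬ hard g i N σ) (h2 : ¬ hard g j N σ) :
    hard g i N ((Equiv.swap i j).trans σ) := by
  classical
  unfold fresh at hf
  push Not at hf
  have hex : ∃ k, k < N ∧ (i:ℕ) ≤ S g k σ := by
    obtain ⟨k, hk, h⟩ := hf
    exact ⟨k, hk, h⟩
  set k := Nat.find hex with hk
  obtain ⟨hkN, hkS⟩ := Nat.find_spec hex
  have hkf : fresh g i k σ := by
    intro k' hk'
    by_contra hc
    exact Nat.find_min hex hk' ⟨by omega, by omega⟩
  have n1 : S g k σ ≠ i := fun h => h1 ⟨k, hkN, h, hkf⟩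
  have n2 : S g k σ ≠ j := fun h => h2 ⟨k, hkN, h, fun k' hk' => by have := hkf k' hk'; omega⟩
  have hS : (j:ℕ) < S g k σ := by
    have : (i:ℕ) ≤ S g k σ := hkS
    omega
  have pj := score_pass σ (X g k σ) j hS
  set σ' := (Equiv.swap i j).trans σ with hσ'
  have hlt : ∀ l : Fin n, (l:ℕ) < i → σ' l = σ l := by
    intro l hl
    simp only [hσ', Equiv.trans_apply]
    rw [Equiv.swap_apply_of_ne_of_ne]
    · intro e; subst e; omega
    · intro e; subst e; omega
  have hH := Hist_congr g σ σ' k (by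
    intro k' hk' l hl
    have := hkf k' hk'
    rw [hlt l (by omega)])
  refine ⟨k, hkN, ?_, ?_⟩
  · have hX := X_of_Hist g σ σ' k (hH k le_rfl)
    apply score_eq
    · rw [le_score _ _ _ i.2.le, hX]
      intro l hl
      rw [hlt l hl]
      exact score_pass σ (X g k σ) l (by show _ < S g k σ; omega)
    · rw [hX]
      simp only [hσ', Equiv.trans_apply, Equiv.swap_apply_left]
      rw [pj, hij]
      exact bit_succ i
  · intro k' hk'
    rw [S_of_Hist g σ σ' k' (hH (k'+1) hk')]
    exact hkf k' hk'

open Classical in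
theorem hard_pair {n : ℕ} (g : List ℕ → Fin n → Bool) (N : ℕ) (i j : Fin n)
    (hij : (j:ℕ) = i + 1) (hf : ∀ σ, ¬ fresh g i N σ) :
    (Fintype.card (Equiv.Perm (Fin n)) : ℝ) / 2 ≤
      ∑ σ, (if hard g i N σ then (1:ℝ) else 0) + ∑ σ, (if hard g j N σ then (1:ℝ) else 0) := by
  have e : ∑ σ : Equiv.Perm (Fin n), (if hard g i N ((Equiv.swap i j).trans σ) then (1:ℝ) else 0) =
      ∑ σ, (if hard g i N σ then (1:ℝ) else 0) := by
    have := Equiv.sum_comp (Equiv.mulRight (Equiv.swap i j))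
      (fun σ => if hard g i N σ then (1:ℝ) else 0)
    exact this
  have p : ∀ σ : Equiv.Perm (Fin n), (1:ℝ) ≤ (if hard g i N ((Equiv.swap i j).trans σ) then (1:ℝ) else 0) +
      (if hard g i N σ then (1:ℝ) else 0) + (if hard g j N σ then (1:ℝ) else 0) := by
    intro σ
    by_cases h1 : hard g i N σ
    · rw [if_pos h1]
      have : (0:ℝ) ≤ (if hard g i N ((Equiv.swap i j).trans σ) then (1:ℝ) else 0) := by
        split_ifs <;> norm_num
      have : (0:ℝ) ≤ (if hard g j N σ then (1:ℝ) else 0) := by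
        split_ifs <;> norm_num
      linarith
    by_cases h2 : hard g j N σ
    · rw [if_pos h2]
      have : (0:ℝ) ≤ (if hard g i N ((Equiv.swap i j).trans σ) then (1:ℝ) else 0) := by
        split_ifs <;> norm_num
      have : (0:ℝ) ≤ (if hard g i N σ then (1:ℝ) else 0) := by
        split_ifs <;> norm_num
      linarith
    rw [if_pos (swap_hard g N i j hij σ (hf σ) h1 h2), if_neg h1, if_neg h2]
    norm_num
  have q := Finset.sum_le_sum (fun σ (_ : σ ∈ (univ : Finset (Equiv.Perm (Fin n)))) => p σ)
  rw [Finset.sum_add_distrib, Finset.sum_add_distrib, e] at q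
  simp only [Finset.sum_const, nsmul_eq_mul, mul_one, Finset.card_univ] at q
  have : (0:ℝ) ≤ ∑ σ, (if hard g j N σ then (1:ℝ) else 0) :=
    Finset.sum_nonneg (fun σ _ => by split_ifs <;> norm_num)
  linarith

open Classical in
theorem lower {n : ℕ} (g : List ℕ → Fin n → Bool) (N : ℕ)
    (hN : ∀ σ, ¬ alive g N σ) (hell : 0 ≤ ell n 1) :
    (n/4 : ℕ) * (Fintype.card (Equiv.Perm (Fin n)) / 2 * ell n 1) ≤ ∑ i ∈ I n, ∑ σ, Phi g i N σ := by
  have hP : ∀ i σ, Phi g i N σ = (if hard g i N σ then (1:ℝ) else 0) * ell n 1 := by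
    intro i σ
    unfold Phi
    rw [not_alive_U (hN σ), Finset.card_singleton]
    split_ifs
    · simp
    · simp
  simp only [hP, ← Finset.sum_mul]
  rw [I_sum]
  calc ((n/4 : ℕ) : ℝ) * (Fintype.card (Equiv.Perm (Fin n)) / 2 * ell n 1)
      = ∑ a : Fin (n/4), (Fintype.card (Equiv.Perm (Fin n)) / 2 * ell n 1) := by simp
    _ ≤ _ := by
      rw [Finset.sum_mul]
      apply Finset.sum_le_sum
      intro a _
      apply mul_le_mul_of_nonneg_right _ hell
      apply hard_pair g N
      · simp [idx]
      · intro σ hfr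
        have h1 := fresh_card hfr
        rw [not_alive_U (hN σ), Finset.card_singleton] at h1
        have := a.2
        simp [idx] at h1
        omega

theorem Identifies_not_alive {n : ℕ} (g : List ℕ → Fin n → Bool) (σ : Equiv.Perm (Fin n)) (m : ℕ)
    (h : Identifies n g (zof σ) σ m) : ¬ alive g m σ := by
  rintro ⟨σ', hne, hH⟩
  have hm := Hist_mono g σ σ' m hH
  apply hne
  refine (h (zof σ') σ' ?_).2
  intro k hk
  have h1 := S_of_Hist g σ σ' k (hm (k+1) hk)
  have h2 := X_of_Hist g σ σ' k (hm k hk.le)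
  unfold S at h1
  rw [h2] at h1
  exact h1

open Classical in
theorem count_le {n : ℕ} (g : List ℕ → Fin n → Bool) (σ : Equiv.Perm (Fin n)) (N : ℕ) :
    ((((range N).filter (fun t => alive g t σ)).card : ℕ) : ℕ∞) ≤ timeToIdentify n g (zof σ) σ := by
  apply le_sInf
  rintro T ⟨m, rfl, hm⟩
  have hna := Identifies_not_alive g σ m hm
  have : (range N).filter (fun t => alive g t σ) ⊆ range m := by
    intro t ht
    have h1 := (Finset.mem_filter.1 ht).2
    rw [Finset.mem_range]
    by_contra hc
    exact hna (alive_anti (not_lt.1 hc) h1)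
  have := Finset.card_le_card this
  rw [Finset.card_range] at this
  exact_mod_cast this

theorem det_bound {n : ℕ} (g : List ℕ → Fin n → Bool) :
    (Fintype.card (Equiv.Perm (Fin n)) : ℝ≥0∞) * ENNReal.ofReal ((n/4 : ℕ) * (ell n 1 / 8 - 1)) ≤
      ∑ σ : Equiv.Perm (Fin n), (timeToIdentify n g (zof σ) σ : ℝ≥0∞) := by
  classical
  by_cases hall : ∀ σ : Equiv.Perm (Fin n), ∃ m, Identifies n g (zof σ) σ m
  · choose m hm using hall
    set N := univ.sup m with hN
    have hna : ∀ σ, ¬ alive g N σ := by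
      intro σ h
      exact Identifies_not_alive g σ (m σ) (hm σ) (alive_anti (Finset.le_sup (Finset.mem_univ σ)) h)
    rcases lt_or_ge (ell n 1) 0 with hell | hell
    · have : ENNReal.ofReal ((n/4 : ℕ) * (ell n 1 / 8 - 1)) = 0 := by
        apply ENNReal.ofReal_of_nonpos
        apply mul_nonpos_of_nonneg_of_nonpos (by positivity)
        linarith
      rw [this]; simp
    have hlo := lower g N hna hell
    have hup := upper g N
    have e : ∀ σ : Equiv.Perm (Fin n), ∑ t ∈ range N, (if alive g t σ then (1:ℝ) else 0) =
        (((range N).filter (fun t => alive g t σ)).card : ℝ) := by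
      intro σ; simp
    simp only [e] at hup
    have hr : (Fintype.card (Equiv.Perm (Fin n)) : ℝ) * ((n/4 : ℕ) * (ell n 1 / 8 - 1)) ≤
        ∑ σ : Equiv.Perm (Fin n), (((range N).filter (fun t => alive g t σ)).card : ℝ) := by
      nlinarith
    calc (Fintype.card (Equiv.Perm (Fin n)) : ℝ≥0∞) * ENNReal.ofReal ((n/4 : ℕ) * (ell n 1 / 8 - 1))
        = ENNReal.ofReal ((Fintype.card (Equiv.Perm (Fin n)) : ℝ) * ((n/4 : ℕ) * (ell n 1 / 8 - 1))) := by
          rw [ENNReal.ofReal_mul (p := (Fintype.card (Equiv.Perm (Fin n)) : ℝ)) (by positivity),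
            ENNReal.ofReal_natCast]
      _ ≤ ENNReal.ofReal (∑ σ : Equiv.Perm (Fin n), (((range N).filter (fun t => alive g t σ)).card : ℝ)) :=
          ENNReal.ofReal_le_ofReal hr
      _ = ∑ σ : Equiv.Perm (Fin n), (((range N).filter (fun t => alive g t σ)).card : ℝ≥0∞) := by
          rw [← Nat.cast_sum, ENNReal.ofReal_natCast, Nat.cast_sum]
      _ ≤ _ := by
          apply Finset.sum_le_sum
          intro σ _
          have := count_le g σ N
          exact_mod_cast ENat.toENNReal_le.2 this
  · push Not at hall
    obtain ⟨σ, hσ⟩ := hall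
    have h1 : timeToIdentify n g (zof σ) σ = ⊤ := by
      unfold timeToIdentify
      rw [sInf_eq_top]
      rintro T ⟨m, -, h⟩
      exact absurd h (hσ m)
    have h2 : (timeToIdentify n g (zof σ) σ : ℝ≥0∞) ≤
        ∑ σ : Equiv.Perm (Fin n), (timeToIdentify n g (zof σ) σ : ℝ≥0∞) :=
      Finset.single_le_sum (f := fun σ : Equiv.Perm (Fin n) => (timeToIdentify n g (zof σ) σ : ℝ≥0∞))
        (fun _ _ => bot_le) (Finset.mem_univ σ)
    rw [h1] at h2
    simp only [ENat.toENNReal_top, top_le_iff] at h2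
    rw [h2]
    exact le_top

theorem numeric (n : ℕ) (hn : Real.exp (Real.exp 16) ≤ n) :
    ENNReal.ofReal (1/512 * n * Real.logb 2 (Real.logb 2 n)) ≤
      ENNReal.ofReal ((n/4 : ℕ) * (ell n 1 / 8 - 1)) := by
  apply ENNReal.ofReal_le_ofReal
  have hn0 : (0:ℝ) < n := (Real.exp_pos _).trans_le hn
  have hL : Real.exp 16 ≤ Real.log n := (Real.le_log_iff_exp_le hn0).2 hn
  have hL0 : 0 < Real.log n := (Real.exp_pos _).trans_le hL
  have hLL : 16 ≤ Real.log (Real.log n) := (Real.le_log_iff_exp_le hL0).2 hL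
  have hell : Real.log (Real.log n) ≤ ell n 1 := by
    unfold ell
    simp only [Nat.cast_one, div_one]
    exact Real.log_le_log hL0 (by linarith)
  have hl2 : (1:ℝ)/2 ≤ Real.log 2 := by
    have := Real.log_two_gt_d9; linarith
  have hl2' : Real.log 2 ≤ 1 := by
    have := Real.log_two_lt_d9; linarith
  have hlb : Real.logb 2 (Real.logb 2 n) ≤ 4 * ell n 1 := by
    unfold Real.logb
    rw [div_le_iff₀ (by linarith), Real.log_div hL0.ne' (by linarith)]
    have h1 : -1 ≤ Real.log (Real.log 2) := by
      rw [Real.le_log_iff_exp_le (by linarith)]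
      have h3 : Real.exp (-1) < 1/2 := by
        rw [Real.exp_neg, inv_eq_one_div]
        apply one_div_lt_one_div_of_lt (by norm_num)
        have := Real.exp_one_gt_d9; linarith
      linarith
    nlinarith
  have h6 : (6:ℝ) ≤ n := by
    have h1 := Real.add_one_le_exp (Real.exp 16)
    have h2 := Real.add_one_le_exp (16:ℝ)
    linarith
  have hq : (n:ℝ)/8 ≤ (n/4 : ℕ) := by
    have h6' : 6 ≤ n := by exact_mod_cast h6
    have : n ≤ 8 * (n/4) := by omega
    have : (n:ℝ) ≤ 8 * (n/4 : ℕ) := by exact_mod_cast this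
    linarith
  calc 1/512 * n * Real.logb 2 (Real.logb 2 n) ≤ 1/512 * n * (4 * ell n 1) := by gcongr
    _ = n/8 * (ell n 1 / 16) := by ring
    _ ≤ (n/4 : ℕ) * (ell n 1 / 8 - 1) := by
        apply mul_le_mul hq _ _ (by positivity)
        · linarith
        · linarith

end HP

/-- The randomized query complexity of the HiddenPermutation problem is `Ω(n log log n)`:
for every distribution over deterministic strategies there is a secret on which the
expected identification time is at least `c · n · log₂ log₂ n`. -/
theorem randomized_lower_bound :
    ∃ c : ℝ, 0 < c ∧ ∃ N : ℕ, ∀ n : ℕ, N ≤ n →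
      ∀ D : PMF (List ℕ → Fin n → Bool),
        ∃ (z : Fin n → Bool) (π : Equiv.Perm (Fin n)),
          ENNReal.ofReal (c * n * Real.logb 2 (Real.logb 2 n)) ≤
            ∑' g, D g * (timeToIdentify n g z π : ℝ≥0∞) := by
  refine ⟨1/512, by norm_num, ⌈Real.exp (Real.exp 16)⌉₊, ?_⟩
  intro n hn D
  have hn' : Real.exp (Real.exp 16) ≤ n := (Nat.le_ceil _).trans (by exact_mod_cast hn)
  set B : ℝ≥0∞ := ENNReal.ofReal (1/512 * n * Real.logb 2 (Real.logb 2 n)) with hB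
  have key : ∀ g : List ℕ → Fin n → Bool,
      (Fintype.card (Equiv.Perm (Fin n)) : ℝ≥0∞) * B ≤
        ∑ σ : Equiv.Perm (Fin n), (timeToIdentify n g (HP.zof σ) σ : ℝ≥0∞) := by
    intro g
    refine le_trans ?_ (HP.det_bound g)
    gcongr
    exact HP.numeric n hn'
  by_contra hcon
  push Not at hcon
  have h1 : ∑ σ : Equiv.Perm (Fin n), ∑' g, D g * (timeToIdentify n g (HP.zof σ) σ : ℝ≥0∞) <
      ∑ σ : Equiv.Perm (Fin n), B :=
    ENNReal.sum_lt_sum_of_nonempty Finset.univ_nonempty (fun σ _ => hcon _ _)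
  rw [Finset.sum_const, nsmul_eq_mul, Finset.card_univ] at h1
  apply absurd h1
  rw [not_lt, ← Summable.tsum_finsetSum (fun _ _ => ENNReal.summable)]
  calc (Fintype.card (Equiv.Perm (Fin n)) : ℝ≥0∞) * B
      = ∑' g, D g * ((Fintype.card (Equiv.Perm (Fin n)) : ℝ≥0∞) * B) := by
        rw [ENNReal.tsum_mul_right, D.tsum_coe, one_mul]
    _ ≤ _ := by
        apply ENNReal.tsum_le_tsum
        intro g
        rw [← Finset.mul_sum]
        gcongr
        exact key g
end
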